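/- Assume Conjecture 2.1 holds for all finite groups. Then: for every finite group G, every normal subgroup N ⊴ G, every irreducible complex character θ of N, every irreducible complex character χ of G lying over θ (i.e. θ is an irreducible constituent of the restriction χ|_N), and every g ∈ G such that χ(gn) ≠ 0 for some n ∈ N, the order of the coset gN in G/N divides |G:N|·θ(1)/χ(1); equivalently, o(gN)·χ(1) divides |G:N|·θ(1) (note that χ(1)/θ(1) divides |G:N|, so |G:N|·θ(1)/χ(1) is an integer). -/

import Mathlib

/-- The solvable residual `G^(∞)` of a group `G`: for finite `G` this is the stable term
of the derived series, here realised as the intersection of all terms of the derived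
series. -/
def solvableResidual (G : Type*) [Group G] : Subgroup G :=
  ⨅ n : ℕ, derivedSeries G n

/-- **Conjecture 2.1.** For every finite group `G` such that `G/Z(G)` has a normal
subgroup `S̄` which is nonabelian simple and has trivial centralizer in `G/Z(G)`, every
faithful irreducible complex character `χ` of `G` whose restriction to `G^(∞)` is
irreducible, and every `g ∈ G` with `χ(g) ≠ 0` and `G = ⟨G^(∞), Z(G), g⟩`, one has
`o(gZ(G))·χ(1) ∣ |G : Z(G)|`. -/
def Conjecture21 : Prop :=
  ∀ (G : Type) [Group G] [Finite G],
    (∃ S : Subgroup (G ⧸ Subgroup.center G), S.Normal ∧ IsSimpleGroup ↥S ∧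
      (∃ a b : ↥S, a * b ≠ b * a) ∧
      Subgroup.centralizer (S : Set (G ⧸ Subgroup.center G)) = ⊥) →
    ∀ (V : FDRep ℂ G), CategoryTheory.Simple V → Function.Injective V.ρ →
      CategoryTheory.Simple (FDRep.of (V.ρ.comp (solvableResidual G).subtype)) →
      ∀ g : G, V.character g ≠ 0 →
        solvableResidual G ⊔ Subgroup.center G ⊔ Subgroup.zpowers g = ⊤ →
        orderOf (QuotientGroup.mk g : G ⧸ Subgroup.center G) * Module.finrank ℂ V ∣
          (Subgroup.center G).index


namespace CT

open Module

section basics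
variable {G : Type} [Group G] {V : Type} [AddCommGroup V] [Module ℂ V]

/-- `U` is stable under the subgroup `S`. -/
def Stab (ρ : G →* (V →ₗ[ℂ] V)) (S : Subgroup G) (U : Submodule ℂ V) : Prop :=
  ∀ x ∈ S, ∀ v ∈ U, ρ x v ∈ U

/-- `U` is a minimal nonzero `S`-stable subspace. -/
structure MinS (ρ : G →* (V →ₗ[ℂ] V)) (S : Subgroup G) (U : Submodule ℂ V) : Prop where
  ne : U ≠ ⊥
  stab : Stab ρ S U
  min : ∀ U' ≤ U, Stab ρ S U' → U' ≠ ⊥ → U' = U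

/-- `r` is the order of `g` modulo `N`. -/
def OM (N : Subgroup G) (g : G) (r : ℕ) : Prop := ∀ j : ℕ, r ∣ j ↔ g ^ j ∈ N

/-- restriction of a representation -/
def subRep (ρ : G →* (V →ₗ[ℂ] V)) (S : Subgroup G) (A : Submodule ℂ V) (h : Stab ρ S A) :
    ↥S →* (A →ₗ[ℂ] A) where
  toFun x := (ρ x).restrict (h x x.2)
  map_one' := by ext v; simp
  map_mul' x y := by ext v; simp

@[simp] lemma subRep_apply (ρ : G →* (V →ₗ[ℂ] V)) (S : Subgroup G) (A : Submodule ℂ V)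
    (h : Stab ρ S A) (x : S) (v : A) : (subRep ρ S A h x v : V) = ρ x v := rfl

lemma OM.exists (N : Subgroup G) [N.Normal] (g : G) :
    OM N g (orderOf (QuotientGroup.mk g : G ⧸ N)) := by
  intro j
  rw [orderOf_dvd_iff_pow_eq_one, ← QuotientGroup.mk_pow, QuotientGroup.eq_one_iff]

lemma OM.unique {N : Subgroup G} {g : G} {r s : ℕ} (h : OM N g r) (h' : OM N g s) : r = s :=
  Nat.dvd_antisymm ((h s).2 ((h' s).1 dvd_rfl)) ((h' r).2 ((h r).1 dvd_rfl))

@[simp] lemma rho_inv_self (ρ : G →* (V →ₗ[ℂ] V)) (x : G) (v : V) : ρ x⁻¹ (ρ x v) = v := by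
  rw [← Module.End.mul_apply, ← map_mul]; simp
@[simp] lemma rho_self_inv (ρ : G →* (V →ₗ[ℂ] V)) (x : G) (v : V) : ρ x (ρ x⁻¹ v) = v := by
  rw [← Module.End.mul_apply, ← map_mul]; simp
lemma rho_mul (ρ : G →* (V →ₗ[ℂ] V)) (x y : G) (v : V) : ρ (x * y) v = ρ x (ρ y v) := by
  rw [map_mul]; rfl
lemma rho_inj (ρ : G →* (V →ₗ[ℂ] V)) (x : G) : Function.Injective (ρ x) :=
  fun a b h => by simpa using congrArg (ρ x⁻¹) h

lemma subRep_min (ρ : G →* (V →ₗ[ℂ] V)) (S : Subgroup G) (A : Submodule ℂ V)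
    (h : MinS ρ S A) : MinS (subRep ρ S A h.stab) ⊤ ⊤ where
  ne := by
    intro h0
    apply h.ne
    rw [Submodule.eq_bot_iff]
    intro x hx
    have : (⟨x, hx⟩ : A) ∈ (⊤ : Submodule ℂ A) := trivial
    rw [h0] at this
    simpa using this
  stab := fun _ _ _ _ => trivial
  min := by
    intro U' _ hU hne
    have := h.min (U'.map A.subtype) (Submodule.map_subtype_le _ _) ?_ ?_
    · rw [eq_top_iff]
      rintro ⟨x, hx⟩ -
      rw [← this] at hx
      obtain ⟨y, hy, rfl⟩ := hx
      exact hy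
    · rintro x hx _ ⟨y, hy, rfl⟩
      exact ⟨subRep ρ S A h.stab ⟨x, hx⟩ y, hU ⟨x, hx⟩ trivial y hy, rfl⟩
    · intro h0
      apply hne
      rw [Submodule.eq_bot_iff] at h0 ⊢
      intro x hx
      exact Subtype.ext (h0 x ⟨x, hx, rfl⟩)

lemma exists_min [FiniteDimensional ℂ V] (ρ : G →* (V →ₗ[ℂ] V)) (S : Subgroup G)
    (A : Submodule ℂ V) (hA : A ≠ ⊥) (hs : Stab ρ S A) : ∃ W ≤ A, MinS ρ S W := by
  obtain ⟨W, ⟨h1, h2, h3⟩, hmin⟩ := (wellFounded_lt (α := Submodule ℂ V)).has_min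
    {U | U ≤ A ∧ U ≠ ⊥ ∧ Stab ρ S U} ⟨A, le_rfl, hA, hs⟩
  refine ⟨W, h1, h2, h3, fun U' hU' hs' hne => ?_⟩
  by_contra hcon
  exact hmin U' ⟨hU'.trans h1, hne, hs'⟩ (lt_of_le_of_ne hU' hcon)

lemma schur [FiniteDimensional ℂ V] (ρ : G →* (V →ₗ[ℂ] V)) (S : Subgroup G)
    (h : MinS ρ S ⊤) (T : V →ₗ[ℂ] V) (hT : ∀ x ∈ S, T * ρ x = ρ x * T) :
    ∃ c : ℂ, T = c • 1 := by
  have : Nontrivial V := by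
    by_contra hn
    rw [not_nontrivial_iff_subsingleton] at hn
    exact h.ne (Subsingleton.elim _ _)
  obtain ⟨c, hc⟩ := Module.End.exists_eigenvalue T
  refine ⟨c, ?_⟩
  have := h.min (Module.End.eigenspace T c) le_top ?_ hc
  · ext v
    have hv : v ∈ Module.End.eigenspace T c := by rw [this]; trivial
    simpa using Module.End.mem_eigenspace_iff.1 hv
  · intro x hx v hv
    rw [Module.End.mem_eigenspace_iff] at hv ⊢
    have := LinearMap.congr_fun (hT x hx) v
    simp only [Module.End.mul_apply] at this
    rw [this, hv, map_smul]

/-- the algebra generated by `ρ(S)` -/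
abbrev alg (ρ : G →* (V →ₗ[ℂ] V)) (S : Subgroup G) : Subalgebra ℂ (Module.End ℂ V) :=
  Algebra.adjoin ℂ (ρ '' (S : Set G))

lemma alg_mem (ρ : G →* (V →ₗ[ℂ] V)) (S : Subgroup G) {x : G} (hx : x ∈ S) : ρ x ∈ alg ρ S :=
  Algebra.subset_adjoin ⟨x, hx, rfl⟩

lemma alg_span (ρ : G →* (V →ₗ[ℂ] V)) (S : Subgroup G) :
    Subalgebra.toSubmodule (alg ρ S) = Submodule.span ℂ (ρ '' (S : Set G)) := by
  have := Algebra.adjoin_eq_span ℂ (ρ '' (S : Set G))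
  rw [this]
  congr 1
  have h2 : ρ '' (S : Set G) = ((S.toSubmonoid.map ρ : Submonoid _) : Set (Module.End ℂ V)) := rfl
  rw [h2, Submonoid.closure_eq]

lemma Stab.alg {ρ : G →* (V →ₗ[ℂ] V)} {S : Subgroup G} {U : Submodule ℂ V} (h : Stab ρ S U)
    {r : Module.End ℂ V} (hr : r ∈ alg ρ S) : ∀ v ∈ U, r v ∈ U := by
  replace hr : r ∈ Subalgebra.toSubmodule (CT.alg ρ S) := hr
  rw [alg_span] at hr
  intro v hv
  induction hr using Submodule.span_induction with
  | mem x hx => obtain ⟨y, hy, rfl⟩ := hx; exact h y hy v hv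
  | zero => simp
  | add a b _ _ h1 h2 => exact U.add_mem h1 h2
  | smul c a _ h1 => exact U.smul_mem c h1

/-- stable subspace as a module over the algebra -/
def Stab.toR {ρ : G →* (V →ₗ[ℂ] V)} {S : Subgroup G} {U : Submodule ℂ V} (h : Stab ρ S U) :
    Submodule (CT.alg ρ S) V where
  carrier := U
  add_mem' := U.add_mem
  zero_mem' := U.zero_mem
  smul_mem' r v hv := h.alg r.2 v hv

lemma Stab.mem_toR {ρ : G →* (V →ₗ[ℂ] V)} {S : Subgroup G} {U : Submodule ℂ V} (h : Stab ρ S U)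
    {v : V} : v ∈ h.toR ↔ v ∈ U := Iff.rfl

lemma stab_of_R {ρ : G →* (V →ₗ[ℂ] V)} {S : Subgroup G} (U : Submodule (CT.alg ρ S) V) :
    Stab ρ S (U.restrictScalars ℂ) :=
  fun x hx _ hv => U.smul_mem ⟨ρ x, alg_mem ρ S hx⟩ hv

lemma MinS.simple {ρ : G →* (V →ₗ[ℂ] V)} {S : Subgroup G} {U : Submodule ℂ V} (h : MinS ρ S U) :
    IsSimpleModule (CT.alg ρ S) h.stab.toR := by
  rw [isSimpleModule_iff_isAtom]
  refine ⟨?_, ?_⟩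
  · intro h0
    apply h.ne
    rw [Submodule.eq_bot_iff]
    intro x hx
    have : x ∈ h.stab.toR := hx
    rw [h0] at this
    simpa using this
  · intro B hB
    by_contra hne
    have := h.min (B.restrictScalars ℂ) (fun v hv => hB.le hv) (stab_of_R B)
      (by simpa using hne)
    apply hB.not_ge
    intro v hv
    have hv' : v ∈ U := hv
    rw [← this] at hv'
    exact hv'

lemma burnside [FiniteDimensional ℂ V] (ρ : G →* (V →ₗ[ℂ] V)) (S : Subgroup G)
    (h : MinS ρ S ⊤) : Submodule.span ℂ (ρ '' (S : Set G)) = ⊤ := by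
  rw [← alg_span, eq_top_iff]
  intro T _
  have hs := h.simple
  have htop : h.stab.toR = ⊤ := by ext; simp [Stab.mem_toR]
  rw [htop] at hs
  have : IsSimpleModule (alg ρ S) V := (LinearEquiv.isSimpleModule_iff (Submodule.topEquiv (R := alg ρ S) (M := V))).1 hs
  let f : Module.End (Module.End (alg ρ S) V) V :=
    { toFun := T
      map_add' := T.map_add
      map_smul' := by
        intro φ v
        obtain ⟨c, hc⟩ := schur ρ S h (φ.restrictScalars ℂ) (by
          intro x hx
          ext v
          exact φ.map_smul ⟨ρ x, alg_mem ρ S hx⟩ v)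
        have hφ : ∀ v, φ v = c • v := fun v => by simpa using LinearMap.congr_fun hc v
        simp only [Module.End.smul_def, RingHom.id_apply, hφ, map_smul] }
  obtain ⟨s, hs⟩ := Module.Finite.fg_top (R := ℂ) (M := V)
  obtain ⟨r, hr⟩ := jacobson_density f s
  have : T = r.1 := by
    refine LinearMap.ext_on (s := (s : Set V)) hs ?_
    intro m hm
    exact hr m hm
  rw [this]
  exact r.2

end basics
end CT


namespace CT

open Module
set_option linter.unusedSectionVars false
set_option linter.unusedSimpArgs false

section imprim
variable {G : Type} [Group G] {V : Type} [AddCommGroup V] [Module ℂ V] [FiniteDimensional ℂ V]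

lemma sup_conj_eq_top (ρ : G →* (V →ₗ[ℂ] V)) (h : MinS ρ ⊤ ⊤) (U : Submodule ℂ V) (hU : U ≠ ⊥) :
    ⨆ y : G, U.map (ρ y) = ⊤ := by
  apply h.min _ le_top
  · intro x _ v hv
    have : (⨆ y : G, U.map (ρ y)).map (ρ x) ≤ ⨆ y : G, U.map (ρ y) := by
      rw [Submodule.map_iSup]
      apply iSup_le
      intro y
      have : (U.map (ρ y)).map (ρ x) = U.map (ρ (x * y)) := by
        rw [map_mul, ← Submodule.map_comp]; rfl
      rw [this]
      exact le_iSup (fun y => U.map (ρ y)) (x * y)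
    exact this ⟨v, hv, rfl⟩
  · intro h0
    apply hU
    rw [eq_bot_iff, ← h0]
    refine le_trans ?_ (le_iSup _ (1 : G))
    rw [map_one]
    intro v hv
    exact ⟨v, hv, rfl⟩

/-- action on subspaces -/
@[reducible] def actSub (ρ : G →* (V →ₗ[ℂ] V)) : MulAction G (Submodule ℂ V) where
  smul g U := U.map (ρ g)
  one_smul U := by
    change U.map (ρ 1) = U
    rw [map_one]; exact Submodule.map_id U
  mul_smul x y U := by
    change U.map (ρ (x * y)) = (U.map (ρ y)).map (ρ x)
    rw [map_mul, ← Submodule.map_comp]; rfl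

lemma finrank_map_rho (ρ : G →* (V →ₗ[ℂ] V)) (y : G) (U : Submodule ℂ V) :
    finrank ℂ (U.map (ρ y)) = finrank ℂ U :=
  (Submodule.equivMapOfInjective (ρ y) (rho_inj ρ y) U).finrank_eq.symm

lemma imprim (ρ : G →* (V →ₗ[ℂ] V)) (h : MinS ρ ⊤ ⊤) (c : Submodule ℂ V) (hc : c ≠ ⊥)
    (hind : sSupIndep (Set.range fun y : G => c.map (ρ y)))
    (H : Subgroup G) (hH : ∀ y, y ∈ H ↔ c.map (ρ y) = c) (g : G)
    (hg : LinearMap.trace ℂ V (ρ g) ≠ 0) :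
    (∃ y, ∃ hs : ∀ v ∈ c, ρ (y⁻¹ * g * y) v ∈ c, y⁻¹ * g * y ∈ H ∧
      LinearMap.trace ℂ c ((ρ (y⁻¹ * g * y)).restrict hs) ≠ 0) ∧
    finrank ℂ V = H.index * finrank ℂ c ∧ MinS ρ H c := by
  classical
  let := actSub ρ
  set O := MulAction.orbit G c with hO
  have hind' : sSupIndep O := hind
  have hfin : O.Finite := WellFoundedGT.finite_of_sSupIndep hind'
  have : Finite O := hfin
  let : Fintype O := Fintype.ofFinite O
  have hi2 : iSupIndep (fun o : O => (o : Submodule ℂ V)) := (sSupIndep_iff _).1 hind'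
  have htop : ⨆ o : O, (o : Submodule ℂ V) = ⊤ := by
    rw [eq_top_iff, ← sup_conj_eq_top ρ h c hc]
    exact iSup_le fun y => le_iSup (fun o : O => (o : Submodule ℂ V)) ⟨y • c, ⟨y, rfl⟩⟩
  have hint : DirectSum.IsInternal (fun o : O => (o : Submodule ℂ V)) :=
    DirectSum.isInternal_submodule_of_iSupIndep_of_iSup_eq_top hi2 htop
  let e := LinearEquiv.ofBijective (DirectSum.coeLinearMap (fun o : O => (o : Submodule ℂ V))) hint
  let p : (o : O) → V →ₗ[ℂ] (o : Submodule ℂ V) := fun o =>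
    (DirectSum.component ℂ O (fun o : O => (o : Submodule ℂ V)) o).comp e.symm.toLinearMap
  have hp1 : ∀ (o : O) (v : (o : Submodule ℂ V)), p o v = v := by
    intro o v
    have : e.symm (v : V) = DirectSum.lof ℂ O (fun o : O => (o : Submodule ℂ V)) o v := by
      rw [LinearEquiv.symm_apply_eq]
      exact (DirectSum.coeLinearMap_lof (fun o : O => (o : Submodule ℂ V)) _ _).symm
    simp only [p, LinearMap.comp_apply, LinearEquiv.coe_coe, this]
    exact DirectSum.component.lof_self ℂ _ _
  have hp2 : ∀ (o o' : O) (v : V), o ≠ o' → v ∈ (o' : Submodule ℂ V) → p o v = 0 := by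
    intro o o' v hne hv
    have : e.symm (v : V) = DirectSum.lof ℂ O (fun o : O => (o : Submodule ℂ V)) o' ⟨v, hv⟩ := by
      rw [LinearEquiv.symm_apply_eq]
      exact (DirectSum.coeLinearMap_lof (fun o : O => (o : Submodule ℂ V)) o' ⟨v, hv⟩).symm
    simp only [p, LinearMap.comp_apply, LinearEquiv.coe_coe, this]
    rw [DirectSum.component.of, dif_neg hne.symm]
  have hp3 : ∀ v : V, ∑ o : O, (p o v : V) = v := by
    intro v
    have hv : v ∈ ⨆ o : O, (o : Submodule ℂ V) := by rw [htop]; trivial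
    induction hv using Submodule.iSup_induction' with
    | mem o v hv =>
      rw [Finset.sum_eq_single o]
      · rw [hp1 o ⟨v, hv⟩]
      · intro o' _ hne
        rw [hp2 o' o v hne hv]; rfl
      · simp
    | zero => simp
    | add a b _ _ h1 h2 => simp only [map_add, Submodule.coe_add, Finset.sum_add_distrib, h1, h2]
  have hmapc : ∀ y : G, ∀ v ∈ c, ρ y v ∈ y • c := fun y v hv => ⟨v, hv, rfl⟩
  refine ⟨?_, ?_, ?_⟩
  · -- trace
    have h1 : ρ g = ∑ o : O, (ρ g).comp ((o : Submodule ℂ V).subtype.comp (p o)) := by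
      ext v
      simp only [LinearMap.sum_apply, LinearMap.comp_apply, Submodule.subtype_apply]
      rw [← map_sum, hp3]
    rw [h1, map_sum] at hg
    obtain ⟨o, -, ho⟩ := Finset.exists_ne_zero_of_sum_ne_zero hg
    obtain ⟨y, hy⟩ := o.2
    have hy' : (o : Submodule ℂ V) = y • c := hy.symm
    rw [← LinearMap.comp_assoc, LinearMap.trace_comp_comm', ] at ho
    -- g o = o
    have hgo : g • (o : Submodule ℂ V) = o := by
      by_contra hne
      apply ho
      have : (p o).comp ((ρ g).comp (o : Submodule ℂ V).subtype) = 0 := by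
        ext v
        have : p o (ρ g v) = 0 := by
          apply hp2 o ⟨g • (o : Submodule ℂ V), ?_⟩
          · intro h; apply hne; exact (congrArg Subtype.val h).symm
          · exact ⟨v, v.2, rfl⟩
          · rw [hy', ← mul_smul]; exact ⟨g * y, rfl⟩
        simp [this]
      rw [this, map_zero]
    have hst : (y⁻¹ * g * y) • c = c := by
      rw [mul_smul, mul_smul, ← hy', hgo, hy', inv_smul_smul]
    have hs : ∀ v ∈ c, ρ (y⁻¹ * g * y) v ∈ c := by
      intro v hv
      have := hmapc (y⁻¹ * g * y) v hv
      rwa [hst] at this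
    refine ⟨y, hs, (hH _).2 hst, ?_⟩
    -- conj
    have hyc : ∀ v ∈ c, ρ y v ∈ (o : Submodule ℂ V) := by rw [hy']; exact hmapc y
    have hyc' : ∀ v ∈ (o : Submodule ℂ V), ρ y⁻¹ v ∈ c := by
      intro v hv
      rw [hy'] at hv
      obtain ⟨w, hw, rfl⟩ := hv
      simpa using hw
    have : (p o).comp ((ρ g).comp (o : Submodule ℂ V).subtype) =
      ((ρ y).restrict hyc) ∘ₗ (((ρ (y⁻¹ * g * y)).restrict hs) ∘ₗ ((ρ y⁻¹).restrict hyc')) := by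
      ext v
      have hv : ρ g v ∈ (o : Submodule ℂ V) := by
        have : ρ g v ∈ g • (o : Submodule ℂ V) := ⟨v, v.2, rfl⟩
        rwa [hgo] at this
      have := hp1 o ⟨_, hv⟩
      simp only [LinearMap.comp_apply, Submodule.subtype_apply] at this ⊢
      rw [this]
      simp only [LinearMap.coe_restrict_apply]
      simp only [← rho_mul]
      congr 2; group
    rw [this, LinearMap.trace_comp_comm', LinearMap.comp_assoc] at ho
    convert ho using 2
    ext v
    simp
  · have h1 : finrank ℂ V = ∑ o : O, finrank ℂ (o : Submodule ℂ V) := by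
      rw [← e.finrank_eq]
      exact Module.finrank_directSum _ _
    have h2 : ∀ o : O, finrank ℂ (o : Submodule ℂ V) = finrank ℂ c := by
      rintro ⟨_, y, rfl⟩
      exact finrank_map_rho ρ y c
    have h3 : H = MulAction.stabilizer G c := by
      ext y; rw [hH, MulAction.mem_stabilizer_iff]; rfl
    rw [h1, Finset.sum_congr rfl (fun o _ => h2 o), Finset.sum_const, h3,
      MulAction.index_stabilizer, smul_eq_mul, Finset.card_univ, ← Nat.card_eq_fintype_card,
      Nat.card_coe_set_eq]
  · refine ⟨hc, ?_, ?_⟩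
    · intro x hx v hv
      have := hmapc x v hv
      have h2 : x • c = c := (hH x).1 hx
      rwa [h2] at this
    · intro U hU hs hne
      apply le_antisymm hU
      have key : ∀ v : V, ((p ⟨c, MulAction.mem_orbit_self c⟩ v : c) : V) ∈ U := by
        have : (⊤ : Submodule ℂ V) ≤
          U.comap (c.subtype.comp (p ⟨c, MulAction.mem_orbit_self c⟩)) := by
          rw [← sup_conj_eq_top ρ h U hne]
          apply iSup_le
          rintro y _ ⟨u, hu, rfl⟩
          rw [Submodule.mem_comap, LinearMap.comp_apply]
          by_cases hy : y ∈ H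
          · have hyu := hs y hy u hu
            have := hp1 ⟨c, MulAction.mem_orbit_self c⟩ ⟨_, hU hyu⟩
            simp only at this
            rw [this]
            exact hyu
          · have := hp2 ⟨c, MulAction.mem_orbit_self c⟩ ⟨y • c, ⟨y, rfl⟩⟩ (ρ y u) ?_ ?_
            · rw [this]; simp
            · intro h; apply hy; rw [hH]; exact (congrArg Subtype.val h).symm
            · exact hmapc y u (hU hu)
        exact fun v => this (Submodule.mem_top (x := v))
      intro v hv
      have := key v
      rwa [hp1 ⟨c, MulAction.mem_orbit_self c⟩ ⟨v, hv⟩] at this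
end imprim
end CT


namespace CT

open Module TensorProduct
set_option linter.unusedSectionVars false
set_option linter.unusedSimpArgs false

section homN
variable {G : Type} [Group G] {V : Type} [AddCommGroup V] [Module ℂ V] [FiniteDimensional ℂ V]

/-- equivariant maps `W → V` -/
def HomN (ρ : G →* (V →ₗ[ℂ] V)) (N : Subgroup G) (W : Submodule ℂ V) :
    Submodule ℂ (W →ₗ[ℂ] V) where
  carrier := {f | ∀ n ∈ N, ∀ w w' : W, (w' : V) = ρ n w → f w' = ρ n (f w)}
  add_mem' := by
    intro a b ha hb n hn w w' h
    simp [ha n hn w w' h, hb n hn w w' h]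
  zero_mem' := by
    intro n hn w w' h
    simp
  smul_mem' := by
    intro c a ha n hn w w' h
    simp [ha n hn w w' h]

variable {ρ : G →* (V →ₗ[ℂ] V)} {N : Subgroup G} {W : Submodule ℂ V}

lemma homN_eq_zero (hW : MinS ρ N W) {f : W →ₗ[ℂ] V} (hf : f ∈ HomN ρ N W) {w : W} (hw : w ≠ 0)
    (h0 : f w = 0) : f = 0 := by
  have := hW.min ((LinearMap.ker f).map W.subtype) (Submodule.map_subtype_le _ _) ?_ ?_
  · ext v
    have hv := this.ge v.2
    obtain ⟨v', hv', e⟩ := hv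
    have : v' = v := Subtype.ext e
    rw [← this]
    simpa using hv'
  · rintro x hx _ ⟨v, hv, rfl⟩
    have hv' : f v = 0 := hv
    refine ⟨⟨ρ x v, hW.stab x hx v v.2⟩, ?_, rfl⟩
    change f _ = 0
    rw [hf x hx v _ rfl, hv', map_zero]
  · intro hb
    apply hw
    rw [Submodule.eq_bot_iff] at hb
    exact Subtype.ext (hb w ⟨w, h0, rfl⟩)

/-- evaluation -/
noncomputable def ev (ρ : G →* (V →ₗ[ℂ] V)) (N : Subgroup G) (W : Submodule ℂ V) :
    W ⊗[ℂ] (HomN ρ N W) →ₗ[ℂ] V :=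
  TensorProduct.lift (LinearMap.flip (HomN ρ N W).subtype)

@[simp] lemma ev_tmul (w : W) (f : HomN ρ N W) : ev ρ N W (w ⊗ₜ f) = (f : W →ₗ[ℂ] V) w := by
  simp [ev]

lemma ev_inj (hW : MinS ρ N W) : Function.Injective (ev ρ N W) := by
  rw [← LinearMap.ker_eq_bot, LinearMap.ker_eq_bot']
  intro z hz
  let b := Module.Free.chooseBasis ℂ (HomN ρ N W)
  obtain ⟨w, rfl⟩ := TensorProduct.eq_repr_basis_right b z
  have hw0 : ∃ w0 : W, w0 ≠ 0 := by
    obtain ⟨x, hx, hx0⟩ := Submodule.exists_mem_ne_zero_of_ne_bot hW.ne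
    exact ⟨⟨x, hx⟩, fun h => hx0 (congrArg Subtype.val h)⟩
  obtain ⟨w0, hw0⟩ := hw0
  have h1 : (w.sum fun i m => (b i : W →ₗ[ℂ] V) m) = 0 := by
    rw [map_finsuppSum] at hz
    simpa using hz
  have hmin := subRep_min ρ N W hW
  have hT : ∀ T : W →ₗ[ℂ] W, (w.sum fun i m => (b i : W →ₗ[ℂ] V) (T m)) = 0 := by
    intro T
    have : T ∈ Submodule.span ℂ (subRep ρ N W hW.stab '' ((⊤ : Subgroup N) : Set N)) := by
      rw [burnside _ _ hmin]; trivial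
    induction this using Submodule.span_induction with
    | mem x hx =>
      obtain ⟨n, -, rfl⟩ := hx
      have h2 := congrArg (ρ n) h1
      rw [map_finsuppSum, map_zero] at h2
      rw [← h2]
      apply Finsupp.sum_congr
      intro i _
      exact (b i).2 n n.2 _ _ rfl
    | zero => simp
    | add x y _ _ hx hy =>
      simp only [LinearMap.add_apply, map_add]
      rw [Finsupp.sum_add, hx, hy, add_zero]
    | smul c x _ hx =>
      simp only [LinearMap.smul_apply, map_smul]
      rw [← Finsupp.smul_sum, hx, smul_zero]
  have hw : w = 0 := by
    ext i
    rw [Finsupp.zero_apply]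
    congr 1
    rw [← Module.forall_dual_apply_eq_zero_iff ℂ]
    intro φ
    have h3 := hT (φ.smulRight w0)
    have h4 : ((w.sum fun i m => φ m • b i : HomN ρ N W) : W →ₗ[ℂ] V) w0 = 0 := by
      rw [← h3]
      simp [Finsupp.sum, LinearMap.sum_apply]
    have h5 := homN_eq_zero hW (w.sum fun i m => φ m • b i : HomN ρ N W).2 hw0 h4
    have h6 : (w.sum fun i m => φ m • b i) = 0 := Subtype.ext h5
    have h7 : Finsupp.linearCombination ℂ b (w.mapRange φ (map_zero φ)) = 0 := by
      rw [Finsupp.linearCombination_apply, Finsupp.sum_mapRange_index, h6]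
      simp
    have h8 := b.linearIndependent (h7.trans (map_zero _).symm)
    have := DFunLike.congr_fun h8 i
    simpa using this
  rw [hw]; simp

/-- isotypic component -/
noncomputable def IC (ρ : G →* (V →ₗ[ℂ] V)) (N : Subgroup G) (W : Submodule ℂ V) :
    Submodule ℂ V := LinearMap.range (ev ρ N W)

lemma IC_le {U : Submodule ℂ V} (h : ∀ f ∈ HomN ρ N W, ∀ w, f w ∈ U) : IC ρ N W ≤ U := by
  rintro _ ⟨z, rfl⟩
  induction z using TensorProduct.induction_on with
  | zero => simp
  | tmul w f => rw [ev_tmul]; exact h f f.2 w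
  | add a b ha hb => rw [map_add]; exact U.add_mem ha hb

lemma mem_IC {f : W →ₗ[ℂ] V} (hf : f ∈ HomN ρ N W) (w : W) : f w ∈ IC ρ N W :=
  ⟨w ⊗ₜ ⟨f, hf⟩, by simp⟩

lemma inj_of_ne {R X Y : Type*} [Ring R] [AddCommGroup X] [AddCommGroup Y] [Module R X] [Module R Y]
    (h : IsSimpleModule R X) (f : X →ₗ[R] Y) (h0 : f ≠ 0) : Function.Injective f :=
  (LinearMap.injective_or_eq_zero f).resolve_right h0

lemma toR_map {U : Submodule ℂ V} (h : Stab ρ N U) (m : Submodule (alg ρ N) V)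
    (e : h.toR ≃ₗ[alg ρ N] m) {n : G} (hn : n ∈ N) (w w' : h.toR)
    (hw : (w' : V) = ρ n w) : (e w' : V) = ρ n (e w) := by
  have h1 := e.map_smul (⟨ρ n, alg_mem ρ N hn⟩ : alg ρ N) w
  refine Eq.trans ?_ (congrArg Subtype.val h1)
  exact congrArg (fun x => (e x : V)) (Subtype.ext hw)

lemma IC_eq (hW : MinS ρ N W) : IC ρ N W =
    (isotypicComponent (alg ρ N) V hW.stab.toR).restrictScalars ℂ := by
  have := hW.simple
  apply le_antisymm
  · apply IC_le
    intro f hf w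
    -- f as an R-linear map
    let f' : hW.stab.toR →ₗ[alg ρ N] V :=
      { toFun := fun w => f w
        map_add' := fun a b => f.map_add a b
        map_smul' := by
          rintro ⟨r, hr⟩ w
          replace hr : r ∈ Subalgebra.toSubmodule (CT.alg ρ N) := hr
          have hr' := hr
          rw [alg_span] at hr
          have : ∀ w : W, ∀ hh : r w ∈ W, f ⟨r w, hh⟩ = r (f w) := by
            clear w hr'
            induction hr using Submodule.span_induction with
            | mem x hx =>
              obtain ⟨n, hn, rfl⟩ := hx
              intro w hh
              exact hf n hn w _ rfl
            | zero =>
              intro w hh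
              have : (⟨(0 : V →ₗ[ℂ] V) w, hh⟩ : W) = 0 := Subtype.ext rfl
              rw [this]; simp
            | add a b ha hb h1 h2 =>
              intro w hh
              rw [← alg_span] at ha hb
              have ha' : a w ∈ W := hW.stab.alg ha w w.2
              have hb' : b w ∈ W := hW.stab.alg hb w w.2
              have : (⟨(a + b) w, hh⟩ : W) = ⟨a w, ha'⟩ + ⟨b w, hb'⟩ := Subtype.ext rfl
              rw [this, map_add, h1 ha, h2 hb]; rfl
            | smul c a ha h1 =>
              intro w hh
              rw [← alg_span] at ha
              have ha' : a w ∈ W := hW.stab.alg ha w w.2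
              have : (⟨(c • a) w, hh⟩ : W) = c • ⟨a w, ha'⟩ := Subtype.ext rfl
              rw [this, map_smul, h1 ha]; rfl
          exact this w (hW.stab.alg hr' w w.2) }
    rcases eq_or_ne f' 0 with h0 | h0
    · have : f w = 0 := LinearMap.congr_fun h0 w
      rw [this]; exact Submodule.zero_mem _
    · have hinj : Function.Injective f' := inj_of_ne hW.simple f' h0
      have hle : LinearMap.range f' ≤ isotypicComponent (alg ρ N) V hW.stab.toR :=
        le_sSup ⟨(LinearEquiv.ofInjective f' hinj).symm⟩
      exact hle ⟨w, rfl⟩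
  · have : ∀ m : Submodule (alg ρ N) V, Nonempty (m ≃ₗ[alg ρ N] hW.stab.toR) →
        ∀ v ∈ m, v ∈ IC ρ N W := by
      rintro m ⟨e⟩ v hv
      let f : W →ₗ[ℂ] V :=
        { toFun := fun w => (e.symm w : V)
          map_add' := fun a b => congrArg Subtype.val (e.symm.map_add a b)
          map_smul' := fun c a => by
            have := congrArg Subtype.val (e.symm.map_smul (algebraMap ℂ (alg ρ N) c) a)
            exact this }
      have hf : f ∈ HomN ρ N W := by
        intro n hn w w' h
        exact toR_map hW.stab m e.symm hn w w' h
      have h2 := mem_IC hf (e ⟨v, hv⟩)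
      have h3 : f (e ⟨v, hv⟩) = v := congrArg Subtype.val (e.symm_apply_apply ⟨v, hv⟩)
      rwa [h3] at h2
    intro v hv
    have hv' : v ∈ sSup {m : Submodule (alg ρ N) V | Nonempty (m ≃ₗ[alg ρ N] hW.stab.toR)} := hv
    have hst : Stab ρ N (IC ρ N W) := by
      intro x hx v hv
      have : IC ρ N W ≤ (IC ρ N W).comap (ρ x) := by
        apply IC_le
        intro f hf w
        rw [Submodule.mem_comap, ← hf x hx w ⟨ρ x w, hW.stab x hx w w.2⟩ rfl]
        exact mem_IC hf _
      exact this hv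
    have hle : sSup {m : Submodule (alg ρ N) V | Nonempty (m ≃ₗ[alg ρ N] hW.stab.toR)} ≤
        hst.toR := sSup_le fun m hm v hv => this m hm v hv
    exact hle hv'

lemma MinS.map_rho [hN : N.Normal] (hW : MinS ρ N W) (y : G) : MinS ρ N (W.map (ρ y)) := by
  have key : ∀ (U : Submodule ℂ V) (y : G), Stab ρ N U → Stab ρ N (U.map (ρ y)) := by
    rintro U y hU x hx _ ⟨u, hu, rfl⟩
    refine ⟨ρ (y⁻¹ * x * y) u, hU _ (by simpa using hN.conj_mem x hx y⁻¹) u hu, ?_⟩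
    simp only [rho_mul, rho_self_inv]
  have kk : ∀ (U : Submodule ℂ V) (y : G), (U.map (ρ y)).map (ρ y⁻¹) = U := by
    intro U y
    ext v
    constructor
    · rintro ⟨_, ⟨u, hu, rfl⟩, rfl⟩
      simpa using hu
    · intro hv
      exact ⟨ρ y v, ⟨v, hv, rfl⟩, by simp⟩
  refine ⟨?_, key _ _ hW.stab, ?_⟩
  · intro h
    apply hW.ne
    rw [← kk W y, h, Submodule.map_bot]
  · intro U' hU' hs hne
    have := hW.min (U'.map (ρ y⁻¹)) ?_ (key _ _ hs) ?_
    · rw [← this]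
      have := kk U' y⁻¹
      rw [inv_inv] at this
      exact this.symm
    · rw [← kk W y]
      exact Submodule.map_mono hU'
    · intro h
      apply hne
      have := kk U' y⁻¹
      rw [h, Submodule.map_bot] at this
      exact this.symm

lemma IC_map_le [hN : N.Normal] (W : Submodule ℂ V) (y : G) :
    (IC ρ N W).map (ρ y) ≤ IC ρ N (W.map (ρ y)) := by
  rw [Submodule.map_le_iff_le_comap]
  apply IC_le
  intro f hf w
  rw [Submodule.mem_comap]
  have hm : ∀ v ∈ W.map (ρ y), ρ y⁻¹ v ∈ W := by
    rintro _ ⟨u, hu, rfl⟩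
    simpa using hu
  let f' : (W.map (ρ y)) →ₗ[ℂ] V := (ρ y) ∘ₗ f ∘ₗ ((ρ y⁻¹).restrict hm)
  have hf' : f' ∈ HomN ρ N (W.map (ρ y)) := by
    intro n hn v v' h
    simp only [f', LinearMap.comp_apply]
    rw [hf (y⁻¹ * n * y) (by simpa using hN.conj_mem n hn y⁻¹) ((ρ y⁻¹).restrict hm v)]
    · simp only [rho_mul, rho_self_inv]
    · simp only [LinearMap.coe_restrict_apply, h, rho_mul, rho_self_inv]
  have := mem_IC hf' ⟨ρ y w, ⟨w, w.2, rfl⟩⟩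
  convert this using 1
  simp only [f', LinearMap.comp_apply]
  congr 2
  exact Subtype.ext (by simp)

lemma IC_map [hN : N.Normal] (W : Submodule ℂ V) (y : G) :
    (IC ρ N W).map (ρ y) = IC ρ N (W.map (ρ y)) := by
  apply le_antisymm (IC_map_le W y)
  have := IC_map_le (ρ := ρ) (N := N) (W.map (ρ y)) y⁻¹
  have h2 : (W.map (ρ y)).map (ρ y⁻¹) = W := by
    ext v
    constructor
    · rintro ⟨_, ⟨u, hu, rfl⟩, rfl⟩
      simpa using hu
    · intro hv
      exact ⟨ρ y v, ⟨v, hv, rfl⟩, by simp⟩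
  rw [h2] at this
  intro v hv
  exact ⟨ρ y⁻¹ v, this ⟨v, hv, rfl⟩, by simp⟩

lemma IC_indep [hN : N.Normal] (hW : MinS ρ N W) :
    sSupIndep (Set.range fun y : G => (IC ρ N W).map (ρ y)) := by
  have h1 : sSupIndep (isotypicComponents (alg ρ N) V) := sSupIndep_isotypicComponents _ _
  have hmem : ∀ c ∈ Set.range (fun y : G => (IC ρ N W).map (ρ y)),
      ∃ c' ∈ isotypicComponents (alg ρ N) V, c = c'.restrictScalars ℂ := by
    rintro _ ⟨y, rfl⟩
    refine ⟨isotypicComponent (alg ρ N) V (hW.map_rho y).stab.toR, ⟨_, (hW.map_rho y).simple, rfl⟩,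
      ?_⟩
    rw [← IC_eq (hW.map_rho y), ← IC_map]
  intro c hc
  obtain ⟨c', hc', rfl⟩ := hmem c hc
  have h2 := h1 hc'
  rw [Submodule.disjoint_def] at h2 ⊢
  intro v hv hv2
  apply h2 v hv
  have : sSup (Set.range (fun y : G => (IC ρ N W).map (ρ y)) \ {c'.restrictScalars ℂ}) ≤
    (sSup (isotypicComponents (alg ρ N) V \ {c'})).restrictScalars ℂ := by
    apply sSup_le
    rintro d ⟨hd, hdne⟩
    obtain ⟨d', hd', rfl⟩ := hmem d hd
    intro x hx
    have : d' ≤ sSup (isotypicComponents (alg ρ N) V \ {c'}) := by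
      apply le_sSup
      refine ⟨hd', ?_⟩
      rintro rfl
      exact hdne rfl
    exact this hx
  exact this hv2

/-- conjugates inside the isotypic component are isomorphic -/
lemma IC_iso [hN : N.Normal] (hW : MinS ρ N W) (y : G) (hy : (IC ρ N W).map (ρ y) = IC ρ N W) :
    ∃ t : W ≃ₗ[ℂ] W, ∀ n ∈ N, ∀ w w' : W, (w' : V) = ρ n w →
      (t w' : V) = ρ (y * n * y⁻¹) (t w) := by
  have := hW.simple
  have hy' := hW.map_rho y
  have hs := hy'.simple
  have hWle : W ≤ IC ρ N W := by
    intro w hw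
    have : W.subtype ∈ HomN ρ N W := by
      intro n _ w w' h
      exact h
    exact mem_IC this ⟨w, hw⟩
  have hle : hy'.stab.toR ≤ isotypicComponent (alg ρ N) V hW.stab.toR := by
    have h1 : W.map (ρ y) ≤ IC ρ N W := by
      rw [← hy]; exact Submodule.map_mono hWle
    rw [IC_eq hW] at h1
    exact h1
  obtain ⟨e⟩ := isIsotypicOfType_submodule_iff.1
    (IsIsotypicOfType.isotypicComponent (alg ρ N) V hW.stab.toR) _ hle
  have e1 : W ≃ₗ[ℂ] W.map (ρ y) := Submodule.equivMapOfInjective (ρ y) (rho_inj ρ y) W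
  let e2 : W.map (ρ y) ≃ₗ[ℂ] W :=
    { toFun := fun v => e v
      invFun := fun v => e.symm v
      left_inv := e.left_inv
      right_inv := e.right_inv
      map_add' := e.map_add
      map_smul' := fun c v => e.map_smul (algebraMap ℂ (alg ρ N) c) v }
  refine ⟨(Submodule.equivMapOfInjective (ρ y) (rho_inj ρ y) W).trans e2, ?_⟩
  intro n hn w w' h
  have hn' : y * n * y⁻¹ ∈ N := hN.conj_mem n hn y
  have h1 : ((Submodule.equivMapOfInjective (ρ y) (rho_inj ρ y) W w' : W.map (ρ y)) : V) =
      ρ (y * n * y⁻¹) (Submodule.equivMapOfInjective (ρ y) (rho_inj ρ y) W w : W.map (ρ y)) := by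
    change ρ y w' = ρ (y * n * y⁻¹) (ρ y w)
    rw [h]
    simp only [rho_mul, rho_inv_self]
  exact toR_map hy'.stab _ e hn' _ _ h1

end homN
end CT


namespace CT

open Module TensorProduct
set_option linter.unusedSectionVars false
set_option linter.unusedSimpArgs false

section gam
variable {G : Type} [Group G] {V : Type} [AddCommGroup V] [Module ℂ V] [FiniteDimensional ℂ V]

/-- scalar action -/
def Sc (ρ : G →* (V →ₗ[ℂ] V)) (N : Subgroup G) : Prop := ∀ x ∈ N, ∃ c : ℂ, ρ x = c • 1

/-- main statement, central version -/
def P (n : ℕ) : Prop :=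
  ∀ (G V : Type) [Group G] [AddCommGroup V] [Module ℂ V] [FiniteDimensional ℂ V]
    (ρ : G →* (V →ₗ[ℂ] V)) (N : Subgroup G), N.Normal → N.index = n → MinS ρ ⊤ ⊤ → Sc ρ N →
    ∀ (g : G) (r : ℕ), LinearMap.trace ℂ V (ρ g) ≠ 0 → OM N g r → r * finrank ℂ V ∣ n

/-- main statement -/
def T (n : ℕ) : Prop :=
  ∀ (G V : Type) [Group G] [AddCommGroup V] [Module ℂ V] [FiniteDimensional ℂ V]
    (ρ : G →* (V →ₗ[ℂ] V)) (N : Subgroup G), N.Normal → N.index = n → MinS ρ ⊤ ⊤ →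
    ∀ W, MinS ρ N W →
    ∀ (g : G) (r : ℕ), LinearMap.trace ℂ V (ρ g) ≠ 0 → OM N g r →
      r * finrank ℂ V ∣ n * finrank ℂ W

variable (ρ : G →* (V →ₗ[ℂ] V)) (N : Subgroup G) (W : Submodule ℂ V) (H : Subgroup G)

/-- pairs intertwining -/
def Tw (p : G × (W ≃ₗ[ℂ] W)) : Prop := ∀ n ∈ N, ∀ w w' : W, (w' : V) = ρ n w →
      (p.2 w' : V) = ρ (p.1 * n * p.1⁻¹) (p.2 w)

variable {ρ N W}

lemma Tw.inv [hN : N.Normal] (hW : Stab ρ N W) {p : G × (W ≃ₗ[ℂ] W)} (hp : Tw ρ N W p) :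
    Tw ρ N W p⁻¹ := by
  intro n hn w w' h
  have hn' : p.1⁻¹ * n * p.1 ∈ N := by simpa using hN.conj_mem n hn p.1⁻¹
  let u : W := p.2⁻¹ w
  let u' : W := ⟨ρ (p.1⁻¹ * n * p.1) u, hW _ hn' u u.2⟩
  have h1 := hp _ hn' u u' rfl
  have h2 : p.2 u = w := p.2.apply_symm_apply w
  have h3 : p.1 * (p.1⁻¹ * n * p.1) * p.1⁻¹ = n := by group
  rw [h3, h2, ← h] at h1
  have h4 : p.2 u' = w' := Subtype.ext h1
  have h5 : p.2⁻¹ w' = u' := by rw [← h4]; exact p.2.symm_apply_apply u'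
  change ((p.2⁻¹ w' : W) : V) = ρ (p.1⁻¹ * n * p.1⁻¹⁻¹) (p.2⁻¹ w : W)
  rw [h5, inv_inv]

/-- the group of twisted pairs -/
def Gam [hN : N.Normal] (hW : Stab ρ N W) : Subgroup (G × (W ≃ₗ[ℂ] W)) where
  carrier := {p | p.1 ∈ H ∧ Tw ρ N W p}
  one_mem' := ⟨H.one_mem, fun n hn w w' h => by simpa using h⟩
  mul_mem' := by
    rintro p q ⟨hp, hp'⟩ ⟨hq, hq'⟩
    refine ⟨H.mul_mem hp hq, fun n hn w w' h => ?_⟩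
    have := hp' _ (hN.conj_mem n hn q.1) _ _ (hq' n hn w w' h)
    have e : p.1 * (q.1 * n * q.1⁻¹) * p.1⁻¹ = (p * q).1 * n * (p * q).1⁻¹ := by
      simp [mul_assoc]
    rw [e] at this
    exact this
  inv_mem' := by
    rintro p ⟨hp, hp'⟩
    exact ⟨H.inv_mem hp, hp'.inv hW⟩

/-- action on the multiplicity space -/
def sig [hN : N.Normal] (hW : Stab ρ N W) :
    Gam H hW →* (HomN ρ N W →ₗ[ℂ] HomN ρ N W) where
  toFun p :=
    { toFun := fun f => ⟨(ρ p.1.1) ∘ₗ f.1 ∘ₗ ((p.1.2⁻¹ : W ≃ₗ[ℂ] W) : W →ₗ[ℂ] W), by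
        intro n hn w w' h
        have h1 := (p.2.2.inv hW) n hn w w' h
        have hn' : p.1.1⁻¹ * n * p.1.1⁻¹⁻¹ ∈ N := hN.conj_mem n hn p.1.1⁻¹
        have h2 := f.2 _ hn' _ _ h1
        change ρ p.1.1 (f.1 (p.1.2⁻¹ w')) = ρ n (ρ p.1.1 (f.1 (p.1.2⁻¹ w)))
        have h3 : f.1 (p.1.2⁻¹ w') = ρ (p.1.1⁻¹ * n * p.1.1⁻¹⁻¹) (f.1 (p.1.2⁻¹ w)) := h2
        rw [h3]
        simp [rho_mul]⟩
      map_add' := fun f f' => by ext w; simp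
      map_smul' := fun c f => by ext w; simp }
  map_one' := by ext f w; simp
  map_mul' p q := by ext f w; simp

lemma sig_apply [hN : N.Normal] (hW : Stab ρ N W) (p : Gam H hW) (f : HomN ρ N W) (w : W) :
    (sig H hW p f : W →ₗ[ℂ] V) w = ρ p.1.1 ((f : W →ₗ[ℂ] V) (p.1.2⁻¹ w)) := rfl

lemma ev_sig [hN : N.Normal] (hW : Stab ρ N W) (p : Gam H hW) (z : W ⊗[ℂ] (HomN ρ N W)) :
    ev ρ N W (TensorProduct.map (p.1.2 : W →ₗ[ℂ] W) (sig H hW p) z) = ρ p.1.1 (ev ρ N W z) := by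
  induction z using TensorProduct.induction_on with
  | zero => simp
  | add a b ha hb => simp [ha, hb]
  | tmul w f =>
    rw [TensorProduct.map_tmul, ev_tmul, ev_tmul, sig_apply]
    congr 2
    exact p.1.2.symm_apply_apply w

lemma trace_sig [hN : N.Normal] (hW : MinS ρ N W) (p : Gam H hW.stab)
    (hs : ∀ v ∈ IC ρ N W, ρ p.1.1 v ∈ IC ρ N W) :
    LinearMap.trace ℂ (IC ρ N W) ((ρ p.1.1).restrict hs) =
      LinearMap.trace ℂ W (p.1.2 : W →ₗ[ℂ] W) * LinearMap.trace ℂ _ (sig H hW.stab p) := by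
  rw [← LinearMap.trace_tensorProduct']
  let e : W ⊗[ℂ] (HomN ρ N W) ≃ₗ[ℂ] IC ρ N W := LinearEquiv.ofInjective _ (ev_inj hW)
  rw [← LinearMap.trace_conj' _ e]
  congr 1
  ext v
  obtain ⟨z, rfl⟩ := e.surjective v
  rw [LinearEquiv.conj_apply_apply, LinearEquiv.symm_apply_apply]
  exact (ev_sig H hW.stab p z).symm

lemma finrank_IC (hW : MinS ρ N W) :
    finrank ℂ (IC ρ N W) = finrank ℂ W * finrank ℂ (HomN ρ N W) := by
  rw [← finrank_tensorProduct]
  exact (LinearEquiv.ofInjective _ (ev_inj hW)).finrank_eq.symm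

lemma sig_min [hN : N.Normal] (hW : MinS ρ N W) (hH : MinS ρ H (IC ρ N W))
    (hsur : ∀ y ∈ H, ∃ t, Tw ρ N W (y, t)) : MinS (sig H hW.stab) ⊤ ⊤ where
  ne := by
    intro h
    apply hH.ne
    apply (Submodule.finrank_eq_zero).1
    have : Subsingleton (HomN ρ N W) := by
      rw [← Submodule.subsingleton_iff ℂ]
      exact subsingleton_of_bot_eq_top h.symm
    rw [finrank_IC hW, finrank_zero_of_subsingleton (M := HomN ρ N W), mul_zero]
  stab := fun _ _ _ _ => trivial
  min := by
    intro U _ hU hne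
    let φ : W ⊗[ℂ] U →ₗ[ℂ] W ⊗[ℂ] (HomN ρ N W) := LinearMap.lTensor W U.subtype
    let ψ : W ⊗[ℂ] U →ₗ[ℂ] V := ev ρ N W ∘ₗ φ
    have hle : LinearMap.range ψ ≤ IC ρ N W := LinearMap.range_comp_le_range _ _
    have hr : LinearMap.range ψ = IC ρ N W := by
      apply hH.min _ hle
      · rintro y hy _ ⟨z, rfl⟩
        obtain ⟨t, ht⟩ := hsur y hy
        let p : Gam H hW.stab := ⟨(y, t), hy, ht⟩
        induction z using TensorProduct.induction_on with
        | zero => simp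
        | add a b ha hb => rw [map_add, map_add]; exact Submodule.add_mem _ ha hb
        | tmul w f =>
          refine ⟨t w ⊗ₜ ⟨sig H hW.stab p f, hU p trivial f f.2⟩, ?_⟩
          have := ev_sig H hW.stab p (w ⊗ₜ f)
          simpa [ψ, φ] using this
      · intro h0
        apply hne
        rw [Submodule.eq_bot_iff]
        intro f hf
        apply Subtype.ext
        ext w
        have : ψ (w ⊗ₜ ⟨f, hf⟩) ∈ LinearMap.range ψ := ⟨_, rfl⟩
        rw [h0] at this
        simpa [ψ, φ] using this
    have h1 : finrank ℂ (IC ρ N W) ≤ finrank ℂ (W ⊗[ℂ] U) := by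
      rw [← hr]; exact LinearMap.finrank_range_le ψ
    have hfree : Module.Free ℂ U := Module.Free.of_divisionRing ℂ U
    rw [finrank_IC hW, finrank_tensorProduct] at h1
    have hWpos : 0 < finrank ℂ W := by
      rw [Nat.pos_iff_ne_zero]
      intro h; exact hW.ne (Submodule.finrank_eq_zero.1 h)
    exact Submodule.eq_top_of_finrank_eq
      (le_antisymm (Submodule.finrank_le U) (Nat.le_of_mul_le_mul_left h1 hWpos))

lemma sig_scalar [hN : N.Normal] (hW : MinS ρ N W) (p : Gam H hW.stab) (hp : p.1.1 ∈ N) :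
    ∃ c : ℂ, sig H hW.stab p = c • 1 := by
  let θ := subRep ρ N W hW.stab
  let y : N := ⟨p.1.1, hp⟩
  -- the operator t⁻¹ ∘ θ y
  obtain ⟨c, hc⟩ := schur θ ⊤ (subRep_min ρ N W hW)
    (((p.1.2⁻¹ : W ≃ₗ[ℂ] W) : W →ₗ[ℂ] W) * θ y) (by
      rintro n -
      ext w
      have h1 := (p.2.2.inv hW.stab) (p.1.1 * n * p.1.1⁻¹) (hN.conj_mem n n.2 _) (θ y w)
        (θ y (θ n w)) (by simp [θ, y, rho_mul])
      have h2 : p.1⁻¹.1 * (p.1.1 * n * p.1.1⁻¹) * p.1⁻¹.1⁻¹ = n := by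
        simp [mul_assoc]
      rw [h2] at h1
      exact h1)
  refine ⟨c, ?_⟩
  ext f w
  rw [sig_apply]
  have h3 : (f : W →ₗ[ℂ] V) (p.1.2⁻¹ (θ y w)) = c • (f : W →ₗ[ℂ] V) w := by
    have := LinearMap.congr_fun hc w
    have h4 : p.1.2⁻¹ (θ y w) = c • w := this
    rw [h4, map_smul]
  have h5 := (p.2.2.inv hW.stab) p.1.1 hp w (θ y w) rfl
  have h6 : p.1⁻¹.1 * p.1.1 * p.1⁻¹.1⁻¹ = p.1.1 := by simp
  rw [h6] at h5
  have h7 := f.2 p.1.1 hp _ _ h5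
  have h8 : ρ p.1.1 ((f : W →ₗ[ℂ] V) (p.1.2⁻¹ w)) = (f : W →ₗ[ℂ] V) (p.1.2⁻¹ (θ y w)) := h7.symm
  rw [h8, h3]; rfl

end gam

section TP

lemma OM.conj {G : Type} [Group G] {N : Subgroup G} [hN : N.Normal] {g : G} {r : ℕ} (h : OM N g r)
    (y : G) : OM N (y⁻¹ * g * y) r := by
  intro j
  rw [h j]
  have : (y⁻¹ * g * y) ^ j = y⁻¹ * g ^ j * y := by
    have := conj_pow (a := y⁻¹) (b := g) (i := j)
    simpa using this
  rw [this]
  constructor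
  · intro h; simpa using hN.conj_mem _ h y⁻¹
  · intro h; simpa [mul_assoc] using hN.conj_mem _ h y

theorem T_of_P (n : ℕ) (hP : ∀ m, m ∣ n → P m) : T n := by
  intro G V _ _ _ _ ρ N hN hn hV W hW g r hg hr
  set c := IC ρ N W with hc
  have hc0 : c ≠ ⊥ := by
    intro h0
    apply hW.ne
    rw [Submodule.eq_bot_iff]
    intro w hw
    have h1 : W.subtype ∈ HomN ρ N W := by
      intro n _ w w' h
      exact h
    have : w ∈ c := mem_IC h1 ⟨w, hw⟩
    rw [h0] at this
    simpa using this
  let H : Subgroup G := @MulAction.stabilizer G (Submodule ℂ V) _ (actSub ρ) c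
  have hH : ∀ y, y ∈ H ↔ c.map (ρ y) = c := fun y => Iff.rfl
  obtain ⟨⟨y, hs, hyH, htr⟩, hfin, hmin⟩ := imprim ρ hV c hc0 (IC_indep hW) H hH g hg
  have hNH : N ≤ H := by
    intro x hx
    rw [hH]
    have hst : ∀ x ∈ N, c.map (ρ x) ≤ c := by
      intro x hx
      rw [Submodule.map_le_iff_le_comap]
      apply IC_le
      intro f hf w
      rw [Submodule.mem_comap, ← hf x hx w ⟨ρ x w, hW.stab x hx w w.2⟩ rfl]
      exact mem_IC hf _
    apply le_antisymm (hst x hx)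
    intro v hv
    exact ⟨ρ x⁻¹ v, hst x⁻¹ (N.inv_mem hx) ⟨v, hv, rfl⟩, by simp⟩
  have hsur : ∀ y ∈ H, ∃ t, Tw ρ N W (y, t) := fun y hy => IC_iso hW y ((hH y).1 hy)
  let Γ := Gam H hW.stab
  let π : Γ →* G := (MonoidHom.fst _ _).comp Γ.subtype
  have hπ : π.range = H := by
    ext x
    constructor
    · rintro ⟨p, rfl⟩; exact p.2.1
    · intro hx
      obtain ⟨t, ht⟩ := hsur x hx
      exact ⟨⟨(x, t), hx, ht⟩, rfl⟩
  have hidx : (N.comap π).index = N.relIndex H := by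
    rw [Subgroup.index_comap, hπ]
  obtain ⟨t, ht⟩ := hsur _ hyH
  let p : Γ := ⟨(_, t), hyH, ht⟩
  have htr2 := trace_sig H hW p hs
  have key := hP (N.relIndex H) ⟨H.index, by rw [Subgroup.relIndex_mul_index hNH, hn]⟩
    Γ (HomN ρ N W) (sig H hW.stab) (N.comap π) inferInstance hidx (sig_min H hW hmin hsur)
    (fun q hq => sig_scalar H hW q hq) p r ?_ ?_
  · rw [← hn, hfin, ← Subgroup.relIndex_mul_index hNH, finrank_IC hW]
    obtain ⟨k, hk⟩ := key
    rw [hk]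
    exact ⟨k, by ring⟩
  · intro h0
    apply htr
    exact htr2.trans (by rw [h0, mul_zero])
  · intro j
    rw [hr.conj y j]
    exact Iff.rfl

end TP
end CT


namespace CT

open Module
set_option linter.unusedSectionVars false
set_option linter.unusedSimpArgs false

section quot

lemma trace_quot {V : Type} [AddCommGroup V] [Module ℂ V] [FiniteDimensional ℂ V]
    (e : V →ₗ[ℂ] V) (B : Submodule ℂ V) (h : ∀ v ∈ B, e v ∈ B) :
    LinearMap.trace ℂ V e = LinearMap.trace ℂ B (e.restrict h) +
      LinearMap.trace ℂ (V ⧸ B) (B.mapQ B e h) := by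
  obtain ⟨s, hs⟩ := LinearMap.exists_rightInverse_of_surjective B.mkQ (Submodule.range_mkQ B)
  have hs' : ∀ x, B.mkQ (s x) = x := fun x => LinearMap.congr_fun hs x
  let p : V →ₗ[ℂ] B := LinearMap.codRestrict B (LinearMap.id - s ∘ₗ B.mkQ) (by
    intro v
    have : B.mkQ (v - s (B.mkQ v)) = 0 := by rw [map_sub, hs', sub_self]
    exact (Submodule.Quotient.mk_eq_zero B).1 this)
  have hp : ∀ v, (p v : V) = v - s (B.mkQ v) := fun v => rfl
  have h1 : e = (e ∘ₗ B.subtype) ∘ₗ p + (e ∘ₗ s) ∘ₗ B.mkQ := by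
    ext v
    simp only [LinearMap.add_apply, LinearMap.comp_apply, Submodule.subtype_apply, hp, map_sub]
    abel
  have h2 : p ∘ₗ (e ∘ₗ B.subtype) = e.restrict h := by
    ext v
    simp only [LinearMap.comp_apply, hp]
    have : B.mkQ (e v) = 0 := by simpa using h v v.2
    simp only [Submodule.subtype_apply, this]
    simp
  have h3 : B.mkQ ∘ₗ (e ∘ₗ s) = B.mapQ B e h := by
    apply LinearMap.ext
    intro x
    conv_rhs => rw [← hs' x]
    simp
  calc LinearMap.trace ℂ V e = LinearMap.trace ℂ V ((e ∘ₗ B.subtype) ∘ₗ p + (e ∘ₗ s) ∘ₗ B.mkQ) := by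
        rw [← h1]
    _ = _ := by
        rw [map_add, LinearMap.trace_comp_comm', LinearMap.trace_comp_comm' B.mkQ, h2, h3]

/-- quotient rep -/
def quotRep {G : Type} [Group G] {V : Type} [AddCommGroup V] [Module ℂ V]
    (ρ : G →* (V →ₗ[ℂ] V)) (B : Submodule ℂ V) (h : Stab ρ ⊤ B) : G →* (V ⧸ B →ₗ[ℂ] V ⧸ B) where
  toFun x := B.mapQ B (ρ x) (h x trivial)
  map_one' := by
    apply Submodule.linearMap_qext; ext v; simp
  map_mul' x y := by
    apply Submodule.linearMap_qext; ext v; simp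

theorem exists_constituent (G : Type) [Group G] (M N : Subgroup G) (g : G) (d : ℕ) (n : ℕ) :
    ∀ (V : Type) [AddCommGroup V] [Module ℂ V] [FiniteDimensional ℂ V]
    (ρ : G →* (V →ₗ[ℂ] V)), finrank ℂ V = n → Sc ρ N → LinearMap.trace ℂ V (ρ g) ≠ 0 →
    (∀ U, Stab ρ M U → d ∣ finrank ℂ U) →
    ∃ (X : Type) (_ : AddCommGroup X) (_ : Module ℂ X) (_ : FiniteDimensional ℂ X)
      (τ : G →* (X →ₗ[ℂ] X)), Sc τ N ∧ LinearMap.trace ℂ X (τ g) ≠ 0 ∧ d ∣ finrank ℂ X ∧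
        MinS τ ⊤ ⊤ := by
  induction n using Nat.strong_induction_on with
  | _ n ih =>
  intro V _ _ _ ρ hn hsc htr hd
  by_cases hirr : ∃ B : Submodule ℂ V, Stab ρ ⊤ B ∧ B ≠ ⊥ ∧ B ≠ ⊤
  · obtain ⟨B, hB, hB0, hB1⟩ := hirr
    have hpos : 0 < finrank ℂ B := by
      rw [Nat.pos_iff_ne_zero]
      intro h; exact hB0 (Submodule.finrank_eq_zero.1 h)
    have hlt : finrank ℂ B < finrank ℂ V := Submodule.finrank_lt hB1
    have hq := Submodule.finrank_quotient_add_finrank B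
    rw [trace_quot (ρ g) B (hB g trivial)] at htr
    by_cases h1 : LinearMap.trace ℂ B ((ρ g).restrict (hB g trivial)) = 0
    · rw [h1, zero_add] at htr
      refine ih (finrank ℂ (V ⧸ B)) (by omega) (V ⧸ B) (quotRep ρ B hB) rfl ?_ htr ?_
      · intro x hx
        obtain ⟨c, hc⟩ := hsc x hx
        refine ⟨c, ?_⟩
        apply Submodule.linearMap_qext
        ext v
        simp [quotRep, hc]
      · intro U hU
        have h2 := hd (U.comap B.mkQ) (by
          intro x hx v hv
          exact hU x hx _ hv)
        have h3 := hd B (fun x _ => hB x trivial)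
        have h4 : finrank ℂ (U.comap B.mkQ) = finrank ℂ U + finrank ℂ B := by
          have e1 := LinearMap.finrank_range_add_finrank_ker (B.mkQ.domRestrict (U.comap B.mkQ))
          rw [LinearMap.range_domRestrict, Submodule.map_comap_eq_of_surjective
            (Submodule.mkQ_surjective B), LinearMap.ker_domRestrict, Submodule.ker_mkQ] at e1
          rw [← e1]
          congr 1
          have hle : B ≤ U.comap B.mkQ := by
            intro v hv
            have : B.mkQ v = 0 := by simpa using hv
            rw [Submodule.mem_comap, this]; exact U.zero_mem
          exact (Submodule.comapSubtypeEquivOfLe hle).finrank_eq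
        rw [h4] at h2
        exact (Nat.dvd_add_left h3).1 h2
    · let τ : G →* (B →ₗ[ℂ] B) := (subRep ρ ⊤ B hB).comp
        (Subgroup.topEquiv (G := G)).symm.toMonoidHom
      have hτ : ∀ x (v : B), (τ x v : V) = ρ x v := fun x v => rfl
      refine ih (finrank ℂ B) (by omega) B τ rfl ?_ h1 ?_
      · intro x hx
        obtain ⟨c, hc⟩ := hsc x hx
        refine ⟨c, ?_⟩
        ext v
        simp [hτ, hc]
      · intro U hU
        have h2 := hd (U.map B.subtype) (by
          rintro x hx _ ⟨v, hv, rfl⟩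
          exact ⟨τ x v, hU x hx v hv, rfl⟩)
        rwa [Submodule.finrank_map_subtype_eq] at h2
  · push Not at hirr
    refine ⟨V, inferInstance, inferInstance, inferInstance, ρ, hsc, htr, ?_, ?_, ?_, ?_⟩
    · have := hd ⊤ (fun _ _ _ _ => trivial)
      rwa [finrank_top] at this
    · intro h0
      apply htr
      have : Subsingleton V := by
        rw [← Submodule.subsingleton_iff ℂ]
        exact subsingleton_of_bot_eq_top h0.symm
      have : ρ g = 0 := by ext v; exact Subsingleton.elim _ _
      rw [this, map_zero]
    · exact fun _ _ _ _ => trivial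
    · intro U _ hU hne
      exact hirr U hU hne

end quot

section claim
variable {G : Type} [Group G] {V : Type} [AddCommGroup V] [Module ℂ V] [FiniteDimensional ℂ V]

lemma finrank_pos_of_min {ρ : G →* (V →ₗ[ℂ] V)} {S : Subgroup G} {W : Submodule ℂ V}
    (h : MinS ρ S W) : 0 < finrank ℂ W := by
  rw [Nat.pos_iff_ne_zero]
  intro h0; exact h.ne (Submodule.finrank_eq_zero.1 h0)

lemma dvd_stab {ρ : G →* (V →ₗ[ℂ] V)} {M : Subgroup G} [hM : M.Normal] (hV : MinS ρ ⊤ ⊤)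
    {W : Submodule ℂ V} (hW : MinS ρ M W) (U : Submodule ℂ V) (hU : Stab ρ M U) :
    finrank ℂ W ∣ finrank ℂ U := by
  have key : ∀ k (U : Submodule ℂ V), Stab ρ M U → finrank ℂ U + k = finrank ℂ V →
      finrank ℂ W ∣ k := by
    intro k
    induction k using Nat.strong_induction_on with
    | _ k ih =>
    intro U hU hk
    rcases Nat.eq_zero_or_pos k with rfl | hkpos
    · exact dvd_zero _
    have hex : ∃ y : G, ¬ W.map (ρ y) ≤ U := by
      by_contra hcon
      push Not at hcon
      have := sup_conj_eq_top ρ hV W hW.ne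
      have h2 : U = ⊤ := by
        rw [eq_top_iff, ← this]; exact iSup_le hcon
      rw [h2, finrank_top] at hk
      omega
    obtain ⟨y, hy⟩ := hex
    have hy' := hW.map_rho y
    have hinf : U ⊓ W.map (ρ y) = ⊥ := by
      by_contra hne
      apply hy
      have := hy'.min (U ⊓ W.map (ρ y)) inf_le_right
        (fun x hx v hv => ⟨hU x hx v hv.1, hy'.stab x hx v hv.2⟩) hne
      rw [← this]; exact inf_le_left
    have hd := Submodule.finrank_sup_add_finrank_inf_eq U (W.map (ρ y))
    rw [hinf, finrank_bot, finrank_map_rho] at hd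
    have hle := Submodule.finrank_le (U ⊔ W.map (ρ y))
    have hWp := finrank_pos_of_min hW
    have := ih (k - finrank ℂ W) (by omega) (U ⊔ W.map (ρ y)) (by
      intro x hx v hv
      rw [Submodule.mem_sup] at hv ⊢
      obtain ⟨a, ha, b, hb, rfl⟩ := hv
      exact ⟨_, hU x hx a ha, _, hy'.stab x hx b hb, (map_add _ _ _).symm⟩) (by omega)
    have h3 : k = (k - finrank ℂ W) + finrank ℂ W := by omega
    rw [h3]
    exact dvd_add this dvd_rfl
  have h1 := key (finrank ℂ V) ⊥ (by rintro x _ v hv; simp_all) (by simp)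
  have hle := Submodule.finrank_le U
  have h2 := key (finrank ℂ V - finrank ℂ U) U hU (by omega)
  have := (Nat.dvd_sub h1 h2)
  rwa [Nat.sub_sub_self hle] at this

lemma relIndex_sup_zpowers (M : Subgroup G) [M.Normal] (g : G) :
    OM M g (M.relIndex (M ⊔ Subgroup.zpowers g)) := by
  have h := Subgroup.relIndex_ker (K := M ⊔ Subgroup.zpowers g) (QuotientGroup.mk' M)
  rw [QuotientGroup.ker_mk', Subgroup.map_sup, MonoidHom.map_zpowers] at h
  have h2 : M.map (QuotientGroup.mk' M) = ⊥ := by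
    rw [Subgroup.map_eq_bot_iff, QuotientGroup.ker_mk']
  rw [h2, bot_sup_eq, Nat.card_zpowers] at h
  rw [h]
  exact OM.exists M g

lemma min_comp {ρ : G →* (V →ₗ[ℂ] V)} {H L : Subgroup G} (hLH : L ≤ H) {W : Submodule ℂ V} :
    MinS (ρ.comp H.subtype) (L.subgroupOf H) W ↔ MinS ρ L W := by
  have hst : ∀ U, Stab (ρ.comp H.subtype) (L.subgroupOf H) U ↔ Stab ρ L U := by
    intro U
    constructor
    · intro h x hx v hv
      exact h ⟨x, hLH hx⟩ hx v hv
    · intro h x hx v hv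
      exact h x hx v hv
  constructor
  · rintro ⟨h1, h2, h3⟩
    exact ⟨h1, (hst _).1 h2, fun U' h h' => h3 U' h ((hst _).2 h')⟩
  · rintro ⟨h1, h2, h3⟩
    exact ⟨h1, (hst _).2 h2, fun U' h h' => h3 U' h ((hst _).1 h')⟩

theorem claim (n : ℕ) (hn0 : n ≠ 0) (hP : ∀ m < n, P m) (hT : ∀ m < n, T m)
    (ρ : G →* (V →ₗ[ℂ] V)) (N : Subgroup G) (hN : N.Normal) (hn : N.index = n) (hV : MinS ρ ⊤ ⊤)
    (hsc : Sc ρ N) (g : G) (r : ℕ) (htr : LinearMap.trace ℂ V (ρ g) ≠ 0) (hr : OM N g r)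
    (M : Subgroup G) (hM : M.Normal) (hNM : N < M) :
    (r * finrank ℂ V ∣ n) ∨ (M ⊔ Subgroup.zpowers g = ⊤ ∧ MinS ρ M ⊤) := by
  obtain ⟨W, -, hW⟩ := exists_min ρ M ⊤ hV.ne (fun _ _ _ _ => trivial)
  have hWpos := finrank_pos_of_min hW
  set H := M ⊔ Subgroup.zpowers g with hH
  set s := M.relIndex H with hs
  have hsOM : OM M g s := relIndex_sup_zpowers M g
  have hMH : M ≤ H := le_sup_left
  have hNH : N ≤ H := hNM.le.trans hMH
  have hi1 : N.relIndex M * M.index = n := by rw [Subgroup.relIndex_mul_index hNM.le, hn]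
  have hi2 : N.relIndex H * H.index = n := by rw [Subgroup.relIndex_mul_index hNH, hn]
  have hi3 : N.relIndex M * s = N.relIndex H := Subgroup.relIndex_mul_relIndex N M H hNM.le hMH
  have hne1 : N.relIndex M ≠ 1 := by
    rw [Ne, Subgroup.relIndex_eq_one]; exact hNM.not_ge
  have hlt : M.index < n := by
    rw [← hi1] at hn0 ⊢
    have : 0 < N.relIndex M := Nat.pos_of_ne_zero (left_ne_zero_of_mul hn0)
    have h2 : 0 < M.index := Nat.pos_of_ne_zero (right_ne_zero_of_mul hn0)
    have : 2 ≤ N.relIndex M := by omega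
    nlinarith
  have hTM := hT M.index hlt G V ρ M hM rfl hV W hW g s htr hsOM
  have hspos : 0 < s := by
    rw [Nat.pos_iff_ne_zero]; intro h0
    rw [h0] at hi3
    rw [← hi2, ← hi3] at hn0; simp at hn0
  by_cases htop : H = ⊤
  · right
    refine ⟨htop, ?_⟩
    have h1 : M.index = s := by rw [hs, htop, Subgroup.relIndex_top_right]
    rw [h1] at hTM
    have h2 := Nat.dvd_of_mul_dvd_mul_left hspos hTM
    have h3 := Nat.le_of_dvd hWpos h2
    have h4 : W = ⊤ := Submodule.eq_top_of_finrank_eq (le_antisymm (Submodule.finrank_le W) h3)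
    rwa [h4] at hW
  · left
    have hgH : g ∈ H := (le_sup_right : _ ≤ H) (Subgroup.mem_zpowers g)
    have hlt2 : N.relIndex H < n := by
      rw [← hi2] at hn0 ⊢
      have : 0 < N.relIndex H := Nat.pos_of_ne_zero (left_ne_zero_of_mul hn0)
      have h2 : 0 < H.index := Nat.pos_of_ne_zero (right_ne_zero_of_mul hn0)
      have h3 : H.index ≠ 1 := by rwa [Ne, Subgroup.index_eq_one]
      have : 2 ≤ H.index := by omega
      nlinarith
    obtain ⟨X, _, _, _, τ, hsc', htr', hdvd, hmin⟩ := exists_constituent H (M.subgroupOf H)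
      (N.subgroupOf H) ⟨g, hgH⟩ (finrank ℂ W) _ V (ρ.comp H.subtype) rfl
      (fun x hx => hsc x hx) htr (fun U hU => dvd_stab hV hW U
        (fun x hx v hv => hU ⟨x, hMH hx⟩ hx v hv))
    have hPH := hP _ hlt2 H X τ (N.subgroupOf H) inferInstance rfl hmin hsc' ⟨g, hgH⟩ r htr'
      (fun j => hr j)
    rw [← hi3] at hPH
    have h1 : r * finrank ℂ W ∣ N.relIndex M * s := (mul_dvd_mul_left r hdvd).trans hPH
    have h2 := mul_dvd_mul h1 hTM
    have h3 : r * finrank ℂ W * (s * finrank ℂ V) = (s * finrank ℂ W) * (r * finrank ℂ V) := by ring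
    have h4 : N.relIndex M * s * (M.index * finrank ℂ W) =
      (s * finrank ℂ W) * (N.relIndex M * M.index) := by ring
    rw [h3, h4, hi1] at h2
    exact Nat.dvd_of_mul_dvd_mul_left (by positivity) h2

end claim
end CT


namespace CT

open Module
set_option linter.unusedSectionVars false
set_option linter.unusedSimpArgs false

section caseA
variable {G : Type} [Group G] {V : Type} [AddCommGroup V] [Module ℂ V] [FiniteDimensional ℂ V]

lemma rho_trace_conj (ρ : G →* (V →ₗ[ℂ] V)) (x y : G) :
    LinearMap.trace ℂ V (ρ (y * x * y⁻¹)) = LinearMap.trace ℂ V (ρ x) := by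
  rw [map_mul ρ, LinearMap.trace_mul_comm, ← map_mul ρ]
  simp

lemma rho_unit (ρ : G →* (V →ₗ[ℂ] V)) (x : G) : ρ x * ρ x⁻¹ = 1 := by
  rw [← map_mul]; simp

lemma rho_unit' (ρ : G →* (V →ₗ[ℂ] V)) (x : G) : ρ x⁻¹ * ρ x = 1 := by
  rw [← map_mul]; simp

lemma trace_eq_zero_of_comm (ρ : G →* (V →ₗ[ℂ] V)) (N M : Subgroup G) (hM : MinS ρ M ⊤)
    (hsc : Sc ρ N) (hS : ∀ x, (∃ c : ℂ, ρ x = c • 1) → x ∈ N)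
    (hab : ∀ x ∈ M, ∀ y ∈ M, x * y * x⁻¹ * y⁻¹ ∈ N) (x : G) (hx : x ∈ M) (hxN : x ∉ N) :
    LinearMap.trace ℂ V (ρ x) = 0 := by
  by_contra h0
  apply hxN
  apply hS
  apply schur ρ M hM
  intro y hy
  obtain ⟨c, hc⟩ := hsc _ (hab y hy x hx)
  have h1 : ρ (y * x * y⁻¹) = c • ρ x := by
    have : y * x * y⁻¹ = (y * x * y⁻¹ * x⁻¹) * x := by group
    rw [this, map_mul, hc]; simp
  have h2 := rho_trace_conj ρ x y
  rw [h1, map_smul, smul_eq_mul] at h2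
  have hc1 : c = 1 := mul_right_cancel₀ h0 (by rw [h2, one_mul])
  rw [hc1, one_smul] at h1
  conv_lhs => rw [← h1]
  rw [← map_mul, ← map_mul]
  simp

lemma relIndex_eq_sq (ρ : G →* (V →ₗ[ℂ] V)) (N M : Subgroup G) (hN : N.Normal) (hNM : N ≤ M)
    (hfin : N.relIndex M ≠ 0) (hM : MinS ρ M ⊤)
    (hsc : Sc ρ N) (htr : ∀ x ∈ M, x ∉ N → LinearMap.trace ℂ V (ρ x) = 0) :
    N.relIndex M = finrank ℂ V * finrank ℂ V := by
  classical
  have hdpos : 0 < finrank ℂ V := by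
    have := finrank_pos_of_min hM
    rwa [finrank_top] at this
  let Q := M ⧸ N.subgroupOf M
  have : Finite Q := Nat.finite_of_card_ne_zero hfin
  let : Fintype Q := Fintype.ofFinite Q
  let s : Q → M := Quotient.out
  have hs : ∀ q : Q, (QuotientGroup.mk (s q) : Q) = q := fun q => Quotient.out_eq' q
  let f : Q → (V →ₗ[ℂ] V) := fun q => ρ (s q)
  have hli : LinearIndependent ℂ f := by
    rw [Fintype.linearIndependent_iff]
    intro a ha j
    have h1 : ∑ i, a i * LinearMap.trace ℂ V (ρ ((s i : G) * (s j : G)⁻¹)) = 0 := by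
      have := congrArg (fun X => LinearMap.trace ℂ V (X * ρ ((s j : G)⁻¹))) ha
      simp only [Finset.sum_mul, map_sum, zero_mul, map_zero, smul_mul_assoc, map_smul,
        smul_eq_mul, f, ← map_mul] at this
      exact this
    rw [Finset.sum_eq_single j] at h1
    · simp only [mul_inv_cancel, map_one, LinearMap.trace_one] at h1
      rcases mul_eq_zero.1 h1 with h | h
      · exact h
      · exfalso
        have : finrank ℂ V = 0 := by exact_mod_cast h
        omega
    · intro i _ hij
      rw [htr, mul_zero]
      · exact M.mul_mem (s i).2 (M.inv_mem (s j).2)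
      · intro hmem
        apply hij
        rw [← hs i, ← hs j]
        apply QuotientGroup.eq.2
        rw [Subgroup.mem_subgroupOf]
        simpa [mul_assoc] using hN.conj_mem _ (N.inv_mem hmem) ((s i : G)⁻¹)
    · simp
  have hsp : ⊤ ≤ Submodule.span ℂ (Set.range f) := by
    rw [← burnside ρ M hM, Submodule.span_le]
    rintro _ ⟨x, hx, rfl⟩
    let q : Q := QuotientGroup.mk ⟨x, hx⟩
    have hq : (s q)⁻¹ * ⟨x, hx⟩ ∈ N.subgroupOf M := QuotientGroup.eq.1 (hs q)
    obtain ⟨c, hc⟩ := hsc _ (Subgroup.mem_subgroupOf.1 hq)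
    have h1 : ρ x = c • f q := by
      have : x = (s q : G) * ((s q : G)⁻¹ * x) := by group
      rw [this, map_mul ρ]
      have hc' : ρ ((s q : G)⁻¹ * x) = c • 1 := hc
      rw [hc']; simp [f]
    rw [h1]
    exact Submodule.smul_mem _ _ (Submodule.subset_span ⟨q, rfl⟩)
  have := Module.finrank_eq_nat_card_basis (Basis.mk hli hsp)
  rw [Module.finrank_linearMap] at this
  exact this.symm

theorem caseA (n : ℕ) (hn0 : n ≠ 0)
    (ρ : G →* (V →ₗ[ℂ] V)) (N : Subgroup G) (hN : N.Normal) (hn : N.index = n)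
    (hsc : Sc ρ N) (hS : ∀ x, (∃ c : ℂ, ρ x = c • 1) → x ∈ N)
    (g : G) (r : ℕ) (hr : OM N g r) (hd : finrank ℂ V ≠ 1)
    (M : Subgroup G) (hM : M.Normal) (hNM : N < M) (hMV : MinS ρ M ⊤)
    (hG : M ⊔ Subgroup.zpowers g = ⊤)
    (hmin : ∀ M' ≤ M, M'.Normal → N < M' → M' = M)
    (hab : ∀ x ∈ M, ∀ y ∈ M, x * y * x⁻¹ * y⁻¹ ∈ N) : r * finrank ℂ V ∣ n := by
  have hi1 : N.relIndex M * M.index = n := by rw [Subgroup.relIndex_mul_index hNM.le, hn]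
  have hne : N.relIndex M ≠ 0 := by rw [← hi1] at hn0; exact left_ne_zero_of_mul hn0
  have hsq := relIndex_eq_sq ρ N M hN hNM.le hne hMV hsc
    (fun x hx hxN => trace_eq_zero_of_comm ρ N M hMV hsc hS hab x hx hxN)
  obtain ⟨p, hp, hpd⟩ := Nat.exists_prime_and_dvd hd
  have : Fact p.Prime := ⟨hp⟩
  have hcomm : ∀ x ∈ M, ∀ y ∈ M, Commute (QuotientGroup.mk x : G ⧸ N) (QuotientGroup.mk y) := by
    intro x hx y hy
    have h1 : (QuotientGroup.mk (x * y * x⁻¹ * y⁻¹) : G ⧸ N) = 1 :=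
      (QuotientGroup.eq_one_iff _).2 (hab x hx y hy)
    simp only [QuotientGroup.mk_mul, QuotientGroup.mk_inv] at h1
    rw [mul_inv_eq_one, mul_inv_eq_iff_eq_mul] at h1
    exact h1
  let M' : Subgroup G :=
    { carrier := {x | x ∈ M ∧ x ^ p ∈ N}
      one_mem' := ⟨M.one_mem, by simp [N.one_mem]⟩
      mul_mem' := by
        rintro x y ⟨hx, hx'⟩ ⟨hy, hy'⟩
        refine ⟨M.mul_mem hx hy, ?_⟩
        rw [← QuotientGroup.eq_one_iff] at hx' hy' ⊢
        rw [QuotientGroup.mk_pow, QuotientGroup.mk_mul, (hcomm x hx y hy).mul_pow,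
          ← QuotientGroup.mk_pow, ← QuotientGroup.mk_pow, hx', hy', one_mul]
      inv_mem' := by
        rintro x ⟨hx, hx'⟩
        refine ⟨M.inv_mem hx, ?_⟩
        rw [inv_pow]; exact N.inv_mem hx' }
  have hM'eq : M' = M := by
    apply hmin M' (fun x hx => hx.1)
    · constructor
      rintro x ⟨hx, hx'⟩ y
      refine ⟨hM.conj_mem x hx y, ?_⟩
      rw [conj_pow]; exact hN.conj_mem _ hx' y
    · constructor
      · intro x hx; exact ⟨hNM.le hx, N.pow_mem hx p⟩
      · intro hle
        have : Finite (M ⧸ N.subgroupOf M) := Nat.finite_of_card_ne_zero hne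
        obtain ⟨q, hq⟩ := exists_prime_orderOf_dvd_card' (G := M ⧸ N.subgroupOf M) p (by
          change p ∣ N.relIndex M
          rw [hsq]; exact hpd.mul_right _)
        obtain ⟨x, rfl⟩ := QuotientGroup.mk_surjective q
        have h1 : (x : G) ∈ M' := by
          refine ⟨x.2, ?_⟩
          have := pow_orderOf_eq_one (QuotientGroup.mk x : M ⧸ N.subgroupOf M)
          rw [hq, ← QuotientGroup.mk_pow, QuotientGroup.eq_one_iff] at this
          simpa [Subgroup.mem_subgroupOf] using this
        have h2 : (QuotientGroup.mk x : M ⧸ N.subgroupOf M) = 1 := by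
          rw [QuotientGroup.eq_one_iff]; exact hle h1
        rw [h2, orderOf_one] at hq
        exact hp.one_lt.ne hq
  have hm := relIndex_sup_zpowers M g
  rw [hG, Subgroup.relIndex_top_right] at hm
  have h1 : g ^ M.index ∈ M' := by rw [hM'eq]; exact (hm _).1 dvd_rfl
  have h2 : r ∣ M.index * p := by
    rw [hr, pow_mul]; exact h1.2
  rw [← hi1, hsq]
  calc r * finrank ℂ V ∣ (M.index * p) * finrank ℂ V := mul_dvd_mul_right h2 _
    _ ∣ (M.index * finrank ℂ V) * finrank ℂ V := mul_dvd_mul_right (mul_dvd_mul_left _ hpd) _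
    _ = _ := by ring

end caseA
end CT


namespace CT

open Module
open scoped commutatorElement
set_option linter.unusedSectionVars false
set_option linter.unusedSimpArgs false
set_option linter.unusedVariables false

section caseB2
variable {G : Type} [Group G] {V : Type} [AddCommGroup V] [Module ℂ V] [FiniteDimensional ℂ V]

/-- elements whose image commutes with a given operator -/
def commSub (ρ : G →* (V →ₗ[ℂ] V)) (f : V →ₗ[ℂ] V) : Subgroup G where
  carrier := {x | ρ x * f = f * ρ x}
  one_mem' := by simp
  mul_mem' := by
    intro a b ha hb
    have ha' : ρ a * f = f * ρ a := ha
    have hb' : ρ b * f = f * ρ b := hb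
    change ρ (a * b) * f = f * ρ (a * b)
    rw [map_mul, mul_assoc, hb', ← mul_assoc, ha', mul_assoc]
  inv_mem' := by
    intro a ha
    have ha' : ρ a * f = f * ρ a := ha
    change ρ a⁻¹ * f = f * ρ a⁻¹
    calc ρ a⁻¹ * f = ρ a⁻¹ * (f * ρ a) * ρ a⁻¹ := by
          rw [mul_assoc, mul_assoc, rho_unit, mul_one]
      _ = f * ρ a⁻¹ := by rw [← ha', ← mul_assoc, rho_unit', one_mul]

lemma mem_commSub {ρ : G →* (V →ₗ[ℂ] V)} {f : V →ₗ[ℂ] V} {x : G} :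
    x ∈ commSub ρ f ↔ ρ x * f = f * ρ x := Iff.rfl

lemma perf_comm (ρ : G →* (V →ₗ[ℂ] V)) (N K : Subgroup G) (hsc : Sc ρ N)
    (hKp : K ≤ ⁅K, K⁆ ⊔ N) (y : G) (hy : ∀ x ∈ K, y * x * y⁻¹ * x⁻¹ ∈ N) :
    ∀ x ∈ K, ρ x * ρ y = ρ y * ρ x := by
  have h0 : ∀ a ∈ K, ∃ c : ℂ, ρ (y * a * y⁻¹) = c • ρ a := by
    intro a ha
    obtain ⟨c, hc⟩ := hsc _ (hy a ha)
    refine ⟨c, ?_⟩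
    have : y * a * y⁻¹ = (y * a * y⁻¹ * a⁻¹) * a := by group
    rw [this, map_mul, hc]; simp
  have h1 : ∀ a ∈ K, ∃ c c' : ℂ, ρ (y * a * y⁻¹) = c • ρ a ∧ ρ (y * a⁻¹ * y⁻¹) = c' • ρ a⁻¹ ∧
      (c * c') • (1 : V →ₗ[ℂ] V) = 1 := by
    intro a ha
    obtain ⟨c, hc⟩ := h0 a ha
    obtain ⟨c', hc'⟩ := h0 a⁻¹ (K.inv_mem ha)
    refine ⟨c, c', hc, hc', ?_⟩
    have : ρ (y * a * y⁻¹) * ρ (y * a⁻¹ * y⁻¹) = 1 := by rw [← map_mul]; simp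
    rw [hc, hc', smul_mul_smul_comm, rho_unit] at this
    exact this
  have h2 : ⁅K, K⁆ ⊔ N ≤ commSub ρ (ρ y) := by
    apply sup_le
    · rw [Subgroup.commutator_le]
      intro a ha b hb
      obtain ⟨c, c', e1, e2, e3⟩ := h1 a ha
      obtain ⟨d, d', f1, f2, f3⟩ := h1 b hb
      have e : ρ (y * ⁅a, b⁆ * y⁻¹) = ρ ⁅a, b⁆ := by
        have : y * ⁅a, b⁆ * y⁻¹ = (y * a * y⁻¹) * (y * b * y⁻¹) * (y * a⁻¹ * y⁻¹) *
            (y * b⁻¹ * y⁻¹) := by rw [commutatorElement_def]; group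
        rw [this, map_mul, map_mul, map_mul, e1, e2, f1, f2, smul_mul_smul_comm,
          smul_mul_smul_comm, smul_mul_smul_comm, commutatorElement_def, map_mul, map_mul, map_mul]
        have h5 : c * d * c' * d' = (c * c') * (d * d') := by ring
        rw [h5]
        generalize ρ a * ρ b * ρ a⁻¹ * ρ b⁻¹ = X
        calc (c * c' * (d * d')) • X = ((c * c') • (1 : V →ₗ[ℂ] V)) * (((d * d') • 1) * X) := by
              rw [smul_mul_assoc, one_mul, smul_mul_assoc, one_mul, mul_smul]
          _ = X := by rw [e3, f3, one_mul, one_mul]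
      rw [mem_commSub]
      conv_lhs => rw [← e]
      rw [← map_mul, ← map_mul]; congr 1; group
    · intro x hx
      obtain ⟨c, hc⟩ := hsc x hx
      rw [mem_commSub, hc]; simp
  intro x hx
  exact h2 (hKp hx)

section avg
variable (ρ : G →* (V →ₗ[ℂ] V)) (N K : Subgroup G) [Fintype (K ⧸ N.subgroupOf K)]

/-- averaging over `K/N` -/
noncomputable def avg (f : V →ₗ[ℂ] V) : V →ₗ[ℂ] V :=
  ∑ q : K ⧸ N.subgroupOf K, ρ (q.out : K) * f * ρ ((q.out : K) : G)⁻¹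

lemma avg_comm (hsc : Sc ρ N) (f : V →ₗ[ℂ] V) (z : G) (hz : z ∈ K) :
    ρ z * avg ρ N K f = avg ρ N K f * ρ z := by
  have hF : ∀ x y : K, (QuotientGroup.mk x : K ⧸ N.subgroupOf K) = QuotientGroup.mk y →
      ρ (x : G) * f * ρ (x : G)⁻¹ = ρ (y : G) * f * ρ (y : G)⁻¹ := by
    intro x y hxy
    have := Subgroup.mem_subgroupOf.1 (QuotientGroup.eq.1 hxy)
    obtain ⟨c, hc⟩ := hsc _ this
    have hc1 : ρ ((x : G)⁻¹ * (y : G)) = c • 1 := hc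
    obtain ⟨c', hc'⟩ := hsc _ (N.inv_mem this)
    have hc2 : ρ ((y : G)⁻¹ * (x : G)) = c' • 1 := by
      rw [← hc']; congr 1; simp
    have h3 : (c * c') • (1 : V →ₗ[ℂ] V) = 1 := by
      have : ρ ((x : G)⁻¹ * (y : G)) * ρ ((y : G)⁻¹ * (x : G)) = 1 := by
        rw [← map_mul]; simp
      rw [hc1, hc2, smul_mul_smul_comm, one_mul] at this
      exact this
    have hy : ρ (y : G) = c • ρ (x : G) := by
      have : (y : G) = x * ((x : G)⁻¹ * y) := by group
      rw [this, map_mul ρ, hc1]; simp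
    have hy' : ρ (y : G)⁻¹ = c' • ρ (x : G)⁻¹ := by
      have : (y : G)⁻¹ = ((y : G)⁻¹ * x) * (x : G)⁻¹ := by group
      rw [this, map_mul ρ, hc2]; simp
    rw [hy, hy', smul_mul_assoc, smul_mul_smul_comm]
    generalize ρ (x : G) * f * ρ (x : G)⁻¹ = X
    calc X = ((c * c') • (1 : V →ₗ[ℂ] V)) * X := by rw [h3, one_mul]
      _ = (c * c') • X := by simp
  have key : ρ z * avg ρ N K f * ρ z⁻¹ = avg ρ N K f := by
    unfold avg
    rw [Finset.mul_sum, Finset.sum_mul]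
    refine Fintype.sum_equiv (MulAction.toPerm (⟨z, hz⟩ : K)) _ _ ?_
    intro q
    have h1 := hF (⟨z, hz⟩ * q.out) ((⟨z, hz⟩ : K) • q).out (by
      rw [QuotientGroup.out_eq', ← smul_eq_mul, ← MulAction.Quotient.smul_mk, QuotientGroup.out_eq'])
    have h2 : ρ (((⟨z, hz⟩ * q.out : K)) : G) * f * ρ (((⟨z, hz⟩ * q.out : K)) : G)⁻¹ =
        ρ z * (ρ (q.out : K) * f * ρ ((q.out : K) : G)⁻¹) * ρ z⁻¹ := by
      simp only [Subgroup.coe_mul, mul_inv_rev, map_mul, mul_assoc]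
    rw [← h2, h1]
    rfl
  conv_rhs => rw [← key]
  rw [mul_assoc, rho_unit', mul_one]

lemma avg_comm' (f e : V →ₗ[ℂ] V) (he : ∀ x ∈ K, ρ x * e = e * ρ x) (hf : f * e = e * f) :
    avg ρ N K f * e = e * avg ρ N K f := by
  unfold avg
  rw [Finset.mul_sum, Finset.sum_mul]
  apply Finset.sum_congr rfl
  intro q _
  have h1 := he _ q.out.2
  have h2 := he _ (K.inv_mem q.out.2)
  rw [mul_assoc, h2, ← mul_assoc, mul_assoc (ρ _) f, hf, ← mul_assoc, h1]
  simp only [mul_assoc]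

lemma trace_avg_mul (f e : V →ₗ[ℂ] V) (he : ∀ x ∈ K, ρ x * e = e * ρ x) :
    LinearMap.trace ℂ V (avg ρ N K f * e) =
      (Fintype.card (K ⧸ N.subgroupOf K) : ℂ) * LinearMap.trace ℂ V (f * e) := by
  unfold avg
  rw [Finset.sum_mul, map_sum, Finset.sum_congr rfl (g := fun _ => LinearMap.trace ℂ V (f * e))]
  · simp
  intro q _
  have h2 := he _ (K.inv_mem q.out.2)
  rw [mul_assoc, h2, ← mul_assoc, LinearMap.trace_mul_comm, ← mul_assoc, ← mul_assoc,
    rho_unit', one_mul]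

end avg

lemma eq_zero_of_trace (A : V →ₗ[ℂ] V) (h : ∀ X : V →ₗ[ℂ] V, LinearMap.trace ℂ V (A * X) = 0) :
    A = 0 := by
  ext v
  rw [LinearMap.zero_apply, ← Module.forall_dual_apply_eq_zero_iff ℂ]
  intro φ
  have h1 := h (φ.smulRight v)
  have h2 : A * (φ.smulRight v) = φ.smulRight (A v) := by
    ext w; simp
  rw [h2, LinearMap.trace_smulRight] at h1
  exact h1

lemma exists_trace_ne (ρ : G →* (V →ₗ[ℂ] V)) (N M K L : Subgroup G)
    (hsc : Sc ρ N) (hfin : N.relIndex K ≠ 0) (hMV : MinS ρ M ⊤) (h : G) (hKM : K ≤ M)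
    (hLK : ∀ y ∈ L, ∀ x ∈ K, ρ x * ρ y = ρ y * ρ x)
    (hgen : ∀ m ∈ M, ∃ l ∈ L, ∃ x ∈ K, m = l * x)
    (b : V →ₗ[ℂ] V) (htr : ∀ x ∈ K, LinearMap.trace ℂ V (ρ (x * h * x⁻¹) * b) =
      LinearMap.trace ℂ V (ρ h * b)) (hb : LinearMap.trace ℂ V (ρ h * b) ≠ 0) :
    ∃ l ∈ L, LinearMap.trace ℂ V (ρ (h * l)) ≠ 0 := by
  classical
  have : Finite (K ⧸ N.subgroupOf K) := Nat.finite_of_card_ne_zero hfin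
  let : Fintype (K ⧸ N.subgroupOf K) := Fintype.ofFinite _
  have hcard : (Fintype.card (K ⧸ N.subgroupOf K) : ℂ) ≠ 0 := by
    exact_mod_cast Fintype.card_ne_zero
  by_contra hcon
  push Not at hcon
  set A := avg ρ N K (ρ h) with hA
  have hAne : A ≠ 0 := by
    intro h0
    have h1 : LinearMap.trace ℂ V (A * b) =
        (Fintype.card (K ⧸ N.subgroupOf K) : ℂ) * LinearMap.trace ℂ V (ρ h * b) := by
      rw [hA]
      unfold avg
      rw [Finset.sum_mul, map_sum,
        Finset.sum_congr rfl (g := fun _ => LinearMap.trace ℂ V (ρ h * b))]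
      · simp
      intro q _
      rw [← map_mul ρ, ← map_mul ρ]
      exact htr _ q.out.2
    rw [h0, zero_mul, map_zero] at h1
    exact (mul_ne_zero hcard hb) h1.symm
  apply hAne
  have hAl : ∀ l ∈ L, LinearMap.trace ℂ V (A * ρ l) = 0 := by
    intro l hl
    rw [hA, trace_avg_mul ρ N K _ _ (hLK l hl), ← map_mul ρ, hcon l hl, mul_zero]
  have hAm : ∀ m ∈ M, LinearMap.trace ℂ V (A * ρ m) = 0 := by
    intro m hm
    obtain ⟨l, hl, x, hx, rfl⟩ := hgen m hm
    have hcomm : ∀ z ∈ K, ρ z * (A * ρ l) = (A * ρ l) * ρ z := by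
      intro z hz
      rw [← mul_assoc, avg_comm ρ N K hsc _ z hz, mul_assoc, hLK l hl z hz, mul_assoc]
    have h1 := trace_avg_mul ρ N K (ρ x) (A * ρ l) hcomm
    have h2 : ∃ c : ℂ, avg ρ N K (ρ x) = c • 1 := by
      apply schur ρ M hMV
      intro m' hm'
      obtain ⟨l', hl', x', hx', rfl⟩ := hgen m' hm'
      have e1 := avg_comm ρ N K hsc (ρ x) x' hx'
      have e2 := avg_comm' ρ N K (ρ x) (ρ l') (hLK l' hl') (hLK l' hl' x hx)
      rw [map_mul, ← mul_assoc, e2, mul_assoc, ← e1, mul_assoc]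
    obtain ⟨c, hc⟩ := h2
    rw [hc] at h1
    rw [smul_mul_assoc, one_mul, map_smul, hAl l hl, smul_zero] at h1
    have h3 := (mul_eq_zero.1 h1.symm).resolve_left hcard
    rw [LinearMap.trace_mul_comm, mul_assoc, ← map_mul ρ] at h3
    exact h3
  apply eq_zero_of_trace
  intro X
  have hX : X ∈ Submodule.span ℂ (ρ '' (M : Set G)) := by rw [burnside ρ M hMV]; trivial
  induction hX using Submodule.span_induction with
  | mem x hx => obtain ⟨m, hm, rfl⟩ := hx; exact hAm m hm
  | zero => simp
  | add a b _ _ h1 h2 => rw [mul_add, map_add, h1, h2, add_zero]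
  | smul c a _ h1 => rw [mul_smul_comm, map_smul, h1, smul_zero]

lemma MinS.mono {ρ : G →* (V →ₗ[ℂ] V)} {S S' : Subgroup G} (h : MinS ρ S ⊤) (hle : S ≤ S') :
    MinS ρ S' ⊤ :=
  ⟨h.ne, fun _ _ _ _ => trivial, fun U hU hs hne => h.min U hU (fun x hx => hs x (hle hx)) hne⟩

theorem caseB2 (n : ℕ) (hn0 : n ≠ 0) (hP : ∀ m < n, P m) (hT : ∀ m < n, T m)
    (ρ : G →* (V →ₗ[ℂ] V)) (N : Subgroup G) (hN : N.Normal) (hn : N.index = n)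
    (hsc : Sc ρ N) (g : G) (r : ℕ) (htr : LinearMap.trace ℂ V (ρ g) ≠ 0) (hr : OM N g r)
    (M K H L : Subgroup G) (hMV : MinS ρ M ⊤) (hNK : N ≤ K) (hKM : K ≤ M) (hMH : M ≤ H)
    (hKp : K ≤ ⁅K, K⁆ ⊔ N) (hL : ∀ y, y ∈ L ↔ ∀ x ∈ K, y * x * y⁻¹ * x⁻¹ ∈ N)
    (hHK : ∀ y ∈ H, ∀ x ∈ K, y * x * y⁻¹ ∈ K) (hLH : L ≤ H)
    (hk : OM H g H.index) (hk1 : H.index ≠ 1)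
    (hconj : ∀ y, y ∉ H → ∀ x ∈ K, y * x * y⁻¹ ∈ L)
    (hgen : ∀ m ∈ M, ∃ l ∈ L, ∃ x ∈ K, m = l * x)
    (hfaith : ∀ j : ℕ, (g ^ H.index) ^ j ∈ L → (g ^ H.index) ^ j ∈ N) :
    r * finrank ℂ V ∣ n := by
  set k := H.index with hkdef
  set h := g ^ k with hh
  have hNL : N ≤ L := by
    intro y hy
    rw [hL]
    intro x hx
    have := hN.conj_mem _ (N.inv_mem hy) x
    have := N.mul_mem hy this
    simpa [mul_assoc] using this
  have hNH : N ≤ H := hNL.trans hLH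
  have hhH : h ∈ H := (hk k).1 dvd_rfl
  have hLnorm : ∀ y ∈ H, ∀ l ∈ L, y * l * y⁻¹ ∈ L := by
    intro y hy l hl
    rw [hL] at hl ⊢
    intro x hx
    have h1 := hl (y⁻¹ * x * y) (by simpa using hHK y⁻¹ (H.inv_mem hy) x hx)
    have h2 := hN.conj_mem _ h1 y
    convert h2 using 1
    group
  have hLK : ∀ y ∈ L, ∀ x ∈ K, ρ x * ρ y = ρ y * ρ x := fun y hy =>
    perf_comm ρ N K hsc hKp y ((hL y).1 hy)
  have hi1 : N.relIndex H * H.index = n := by rw [Subgroup.relIndex_mul_index hNH, hn]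
  have hi2 : N.relIndex L * L.relIndex H = N.relIndex H :=
    Subgroup.relIndex_mul_relIndex N L H hNL hLH
  have hNHpos : 0 < N.relIndex H := by
    rw [← hi1] at hn0; exact Nat.pos_of_ne_zero (left_ne_zero_of_mul hn0)
  have hkpos : 0 < H.index := by
    rw [← hi1] at hn0; exact Nat.pos_of_ne_zero (right_ne_zero_of_mul hn0)
  have hNHlt : N.relIndex H < n := by
    rw [← hi1]
    have : 2 ≤ H.index := by omega
    nlinarith
  have hNKne : N.relIndex K ≠ 0 := by
    intro h0
    have := Subgroup.relIndex_mul_relIndex N K H hNK (hKM.trans hMH)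
    rw [h0, zero_mul] at this
    omega
  -- trace identity
  have htrace : ∀ x ∈ K, LinearMap.trace ℂ V (ρ (x * h * x⁻¹ * h⁻¹ * g)) =
      LinearMap.trace ℂ V (ρ g) := by
    intro x hx
    set m := (x * g) ^ k * h⁻¹ with hm
    have hmL : ∀ j, j + 1 ≤ k → x⁻¹ * ((x * g) ^ (j + 1) * (g ^ (j + 1))⁻¹) ∈ L := by
      intro j
      induction j with
      | zero => intro _; simp [L.one_mem]
      | succ j ih =>
        intro hj
        have h1 := ih (by omega)
        have h2 : g ^ (j + 1) * x * (g ^ (j + 1))⁻¹ ∈ L := by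
          apply hconj _ _ x hx
          rw [← hk]
          intro hdvd
          have := Nat.le_of_dvd (by omega) hdvd
          omega
        have h3 := L.mul_mem h1 h2
        convert h3 using 1
        rw [pow_succ (x * g) (j + 1), pow_succ g (j + 1)]
        group
    have hmL' : x⁻¹ * m ∈ L := by
      have := hmL (k - 1) (by omega)
      rwa [Nat.sub_add_cancel hkpos] at this
    have hz : h * x⁻¹ * h⁻¹ ∈ K := hHK h hhH _ (K.inv_mem hx)
    have e1 : m * g * m⁻¹ = m * (h * x⁻¹ * h⁻¹) * m⁻¹ * (x * g) := by
      have hgm : g * m * g⁻¹ = x⁻¹ * m * (h * x * h⁻¹) := by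
        have h1 : h * g = g * h := by rw [hh]; exact (pow_mul_comm' g k)
        have h2 : g * h⁻¹ * g⁻¹ = h⁻¹ := by
          rw [mul_inv_eq_iff_eq_mul, eq_inv_mul_iff_mul_eq, ← mul_assoc, h1, mul_assoc,
            mul_inv_cancel, mul_one]
        have h4 : g * (x * g) ^ k * g⁻¹ = x⁻¹ * (x * g) ^ k * x := by
          have h5 : g = x⁻¹ * (x * g) := by group
          have h6 : (x * g) * (x * g) ^ k = (x * g) ^ k * (x * g) := (pow_mul_comm' _ _).symm
          calc g * (x * g) ^ k * g⁻¹ = x⁻¹ * ((x * g) * (x * g) ^ k) * g⁻¹ := by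
                generalize (x * g) ^ k = Y; group
            _ = x⁻¹ * (x * g) ^ k * x := by
                rw [h6]; generalize (x * g) ^ k = Y; group
        calc g * m * g⁻¹ = (g * (x * g) ^ k * g⁻¹) * (g * h⁻¹ * g⁻¹) := by rw [hm]; group
          _ = _ := by rw [h4, h2, hm]; group
      have h7 : g * m⁻¹ * g⁻¹ = (h * x⁻¹ * h⁻¹) * m⁻¹ * x := by
        have := congrArg (fun t => t⁻¹) hgm
        simp only [mul_inv_rev, inv_inv] at this
        rw [mul_assoc g, this]; group
      calc m * g * m⁻¹ = m * (g * m⁻¹ * g⁻¹) * g := by group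
        _ = _ := by rw [h7]; group
    have e2 : ρ (m * (h * x⁻¹ * h⁻¹) * m⁻¹) = ρ (x * (h * x⁻¹ * h⁻¹) * x⁻¹) := by
      have hc := hLK _ hmL' _ hz
      have hmx : m = x * (x⁻¹ * m) := by group
      set l := x⁻¹ * m
      rw [hmx]
      have : x * l * (h * x⁻¹ * h⁻¹) * (x * l)⁻¹ = x * (l * (h * x⁻¹ * h⁻¹)) * (l⁻¹ * x⁻¹) := by
        group
      rw [this, map_mul ρ, map_mul ρ x, map_mul ρ l, ← hc, ← map_mul ρ, ← map_mul ρ, ← map_mul ρ]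
      congr 1; group
    have e3 : ρ (m * g * m⁻¹) = ρ (x * h * x⁻¹ * h⁻¹ * g) := by
      rw [e1, map_mul ρ, e2, ← map_mul ρ]; congr 1; group
    rw [← e3, rho_trace_conj]
  obtain ⟨l, hl, hltr⟩ := exists_trace_ne ρ N M K L hsc hNKne hMV h hKM hLK hgen (ρ (h⁻¹ * g))
    (by
      intro x hx
      rw [← map_mul ρ, ← map_mul ρ]
      have := htrace x hx
      have e : x * h * x⁻¹ * (h⁻¹ * g) = x * h * x⁻¹ * h⁻¹ * g := by group
      rw [e, this]
      congr 2; group) (by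
      rw [← map_mul ρ]
      simpa using htr)
  -- order
  set s := orderOf (QuotientGroup.mk h : G ⧸ N)
  have hs : OM N h s := OM.exists N h
  let L' := L.subgroupOf H
  have hL'n : L'.Normal := ⟨fun a ha b => hLnorm b b.2 a ha⟩
  let h' : H := ⟨h, hhH⟩
  let l' : H := ⟨l, hLH hl⟩
  have hsL : OM L' (h' * l') s := by
    intro j
    rw [hs j]
    have h1 : (h' * l') ^ j ∈ L' ↔ h' ^ j ∈ L' := by
      rw [← QuotientGroup.eq_one_iff, ← QuotientGroup.eq_one_iff, QuotientGroup.mk_pow,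
        QuotientGroup.mk_pow, QuotientGroup.mk_mul, (QuotientGroup.eq_one_iff l').2 hl, mul_one]
    rw [h1]
    have h2 : h' ^ j ∈ L' ↔ h ^ j ∈ L := Iff.rfl
    rw [h2]
    exact ⟨fun h => hNL h, hfaith j⟩
  have hHV : MinS ρ H ⊤ := hMV.mono hMH
  obtain ⟨W, -, hW⟩ := exists_min ρ L ⊤ hMV.ne (fun _ _ _ _ => trivial)
  have hWpos := finrank_pos_of_min hW
  have hHV' : MinS (ρ.comp H.subtype) ⊤ ⊤ := by
    have := (min_comp (le_refl H)).2 hHV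
    rwa [Subgroup.subgroupOf_self] at this
  have hLHlt : L.relIndex H < n :=
    lt_of_le_of_lt (Nat.le_of_dvd hNHpos ⟨_, by rw [← hi2, mul_comm]⟩) hNHlt
  have hNLlt : N.relIndex L < n :=
    lt_of_le_of_lt (Nat.le_of_dvd hNHpos ⟨_, hi2.symm⟩) hNHlt
  have t1 := hT _ hLHlt H V (ρ.comp H.subtype) L' hL'n rfl hHV' W ((min_comp hLH).2 hW)
    (h' * l') s hltr hsL
  have t2 := hP _ hNLlt L W (subRep ρ L W hW.stab) (N.subgroupOf L) inferInstance rfl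
    (subRep_min ρ L W hW) (by
      intro x hx
      obtain ⟨c, hc⟩ := hsc x hx
      refine ⟨c, ?_⟩
      ext v
      simp [hc]) 1 1 (by
        rw [map_one, LinearMap.trace_one]
        exact_mod_cast hWpos.ne') (by intro j; simp [Subgroup.one_mem])
  rw [one_mul] at t2
  have hrd : r ∣ k * s := by
    rw [hr, pow_mul]; exact (hs s).1 dvd_rfl
  calc r * finrank ℂ V ∣ (k * s) * finrank ℂ V := mul_dvd_mul_right hrd _
    _ = k * (s * finrank ℂ V) := by ring
    _ ∣ k * (L.relIndex H * finrank ℂ W) := mul_dvd_mul_left _ t1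
    _ ∣ k * (L.relIndex H * N.relIndex L) := mul_dvd_mul_left _ (mul_dvd_mul_left _ t2)
    _ = n := by rw [← hi1, ← hi2]; ring

end caseB2
end CT

namespace CT
open Module
open scoped commutatorElement

section GT
variable {Q : Type} [Group Q]

theorem comm_le_of_sup (C : Subgroup Q) [C.Normal] (g : Q) (h : C ⊔ Subgroup.zpowers g = ⊤)
    (a b : Q) : a * b * a⁻¹ * b⁻¹ ∈ C := by
  have key : ∀ x : Q, ∃ i : ℤ, (QuotientGroup.mk x : Q ⧸ C) = (QuotientGroup.mk g : Q ⧸ C) ^ i := by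
    intro x
    have hx : x ∈ C ⊔ Subgroup.zpowers g := h ▸ Subgroup.mem_top x
    rw [Subgroup.mem_sup_of_normal_left] at hx
    obtain ⟨c, hc, y, ⟨i, rfl⟩, rfl⟩ := hx
    refine ⟨i, ?_⟩
    have : (QuotientGroup.mk c : Q ⧸ C) = 1 := (QuotientGroup.eq_one_iff c).2 hc
    rw [QuotientGroup.mk_mul, this, one_mul]; rfl
  rw [← QuotientGroup.eq_one_iff]
  obtain ⟨i, hi⟩ := key a
  obtain ⟨j, hj⟩ := key b
  simp only [QuotientGroup.mk_mul, QuotientGroup.mk_inv, hi, hj]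
  group

/-- hypotheses on the minimal normal subgroup -/
structure MinNorm (M : Subgroup Q) (g : Q) : Prop where
  norm : M.Normal
  ne : M ≠ ⊥
  min : ∀ M' ≤ M, M'.Normal → M' ≠ ⊥ → M' = M
  nonab : ∃ a ∈ M, ∃ b ∈ M, a * b ≠ b * a
  gen : ∀ M' : Subgroup Q, M'.Normal → M' ≠ ⊥ → M' ⊔ Subgroup.zpowers g = ⊤

theorem MinNorm.cent {M : Subgroup Q} {g : Q} (h : MinNorm M g) :
    Subgroup.centralizer (M : Set Q) = ⊥ := by
  have := h.norm
  by_contra hC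
  have hc := comm_le_of_sup _ g (h.gen _ inferInstance hC)
  obtain ⟨a, ha, b, hb, hab⟩ := h.nonab
  have hle : ⁅M, M⁆ ≤ Subgroup.centralizer (M : Set Q) := by
    rw [Subgroup.commutator_le]
    intro x _ y _
    exact hc x y
  have hMM : ⁅M, M⁆ = M := by
    apply h.min _ (Subgroup.commutator_le_left M M) inferInstance
    intro h0
    apply hab
    have : ⁅a, b⁆ ∈ ⁅M, M⁆ := Subgroup.commutator_mem_commutator ha hb
    rw [h0, Subgroup.mem_bot] at this
    exact commutatorElement_eq_one_iff_mul_comm.1 this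
  rw [hMM] at hle
  exact hab ((Subgroup.mem_centralizer_iff.1 (hle hb)) a ha)

def Inv (M K : Subgroup Q) : Prop := ∀ m ∈ M, ∀ x ∈ K, m * x * m⁻¹ ∈ K

theorem exists_min_inv [Finite Q] (M : Subgroup Q) (hM : M.Normal) (hne : M ≠ ⊥) :
    ∃ K ≤ M, K ≠ ⊥ ∧ Inv M K ∧ ∀ K' ≤ K, K' ≠ ⊥ → Inv M K' → K' = K := by
  have hfin : {K : Subgroup Q | K ≤ M ∧ K ≠ ⊥ ∧ Inv M K}.Finite := Set.toFinite _
  obtain ⟨K, hK⟩ := hfin.exists_minimal ⟨M, le_rfl, hne, fun m _ x hx => hM.conj_mem x hx m⟩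
  exact ⟨K, hK.1.1, hK.1.2.1, hK.1.2.2, fun K' h1 h2 h3 =>
    le_antisymm h1 (hK.2 ⟨h1.trans hK.1.1, h2, h3⟩ h1)⟩

theorem conj_dich [Finite Q] (M : Subgroup Q) (hM : M.Normal) (K : Subgroup Q) (hKM : K ≤ M)
    (hinv : Inv M K) (hmin : ∀ K' ≤ K, K' ≠ ⊥ → Inv M K' → K' = K) (y : Q) :
    (∀ x, x ∈ K ↔ y * x * y⁻¹ ∈ K) ∨ (∀ x ∈ K, ∀ x' ∈ K, x' * (y * x * y⁻¹) = (y * x * y⁻¹) * x') := by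
  set Ky := K.map (MulAut.conj y).toMonoidHom with hKy
  have memKy : ∀ z, z ∈ Ky ↔ y⁻¹ * z * y ∈ K := by
    intro z
    rw [hKy, Subgroup.mem_map]
    constructor
    · rintro ⟨x, hx, rfl⟩
      simpa [mul_assoc] using hx
    · intro hz
      exact ⟨_, hz, by simp [mul_assoc]⟩
  have hKyinv : Inv M Ky := by
    intro m hm z hz
    rw [memKy] at hz ⊢
    have := hinv (y⁻¹ * m * y) (by simpa using hM.conj_mem m hm y⁻¹) _ hz
    convert this using 1
    group
  by_cases h0 : K ⊓ Ky = ⊥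
  · right
    intro x hx x' hx'
    set z := y * x * y⁻¹ with hz
    have hzK : z ∈ Ky := by rw [memKy, hz]; simpa [mul_assoc] using hx
    have hzM : z ∈ M := hM.conj_mem _ (hKM hx) y
    have : x' * z * x'⁻¹ * z⁻¹ ∈ K ⊓ Ky := by
      refine ⟨?_, ?_⟩
      · have := K.mul_mem hx' (hinv z hzM _ (K.inv_mem hx'))
        simpa [mul_assoc] using this
      · exact Ky.mul_mem (hKyinv _ (hKM hx') _ hzK) (Ky.inv_mem hzK)
    rw [h0, Subgroup.mem_bot, mul_inv_eq_one, mul_inv_eq_iff_eq_mul] at this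
    exact this
  · left
    have h1 := hmin _ inf_le_left h0 (fun m hm x hx => ⟨hinv m hm x hx.1, hKyinv m hm x hx.2⟩)
    have h2 : K ≤ Ky := inf_eq_left.1 h1
    have h3 : Ky = K := by
      symm
      apply Subgroup.eq_of_le_of_card_ge h2
      rw [hKy]
      exact Nat.le_of_dvd Nat.card_pos (Subgroup.card_map_dvd _ _)
    intro x
    conv_rhs => rw [← h3, memKy]
    simp [mul_assoc]

theorem closure_conj {M K : Subgroup Q} {g : Q} (h : MinNorm M g) (hKM : K ≤ M) (hK : K ≠ ⊥) :
    Subgroup.closure {z | ∃ y, ∃ x ∈ K, z = y * x * y⁻¹} = M := by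
  have hMn := h.norm
  apply h.min
  · rw [Subgroup.closure_le]
    rintro _ ⟨y, x, hx, rfl⟩
    exact h.norm.conj_mem x (hKM hx) y
  · constructor
    intro z hz w
    induction hz using Subgroup.closure_induction with
    | mem z hz =>
      obtain ⟨y, x, hx, rfl⟩ := hz
      exact Subgroup.subset_closure ⟨w * y, x, hx, by group⟩
    | one => simp [Subgroup.one_mem]
    | mul a b _ _ ha hb =>
      have := Subgroup.mul_mem _ ha hb
      convert this using 1
      group
    | inv a _ ha =>
      have := Subgroup.inv_mem _ ha
      convert this using 1
      group
  · intro h0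
    apply hK
    rw [eq_bot_iff, ← h0]
    intro x hx
    exact Subgroup.subset_closure ⟨1, x, hx, by simp⟩

theorem grp [Finite Q] (M : Subgroup Q) (g : Q) (h : MinNorm M g) :
    IsSimpleGroup M ∨ ∃ K H L : Subgroup Q, K ≤ M ∧ M ≤ H ∧ K ≤ ⁅K, K⁆ ∧
      (∀ y, y ∈ L ↔ ∀ x ∈ K, y * x * y⁻¹ * x⁻¹ = 1) ∧ (∀ y ∈ H, ∀ x ∈ K, y * x * y⁻¹ ∈ K) ∧
      L ≤ H ∧ OM H g H.index ∧ H.index ≠ 1 ∧ (∀ y, y ∉ H → ∀ x ∈ K, y * x * y⁻¹ ∈ L) ∧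
      (∀ m ∈ M, ∃ l ∈ L, ∃ x ∈ K, m = l * x) ∧
      (∀ j : ℕ, (g ^ H.index) ^ j ∈ L → (g ^ H.index) ^ j = 1) := by
  have hMn := h.norm
  obtain ⟨K, hKM, hKne, hinv, hmin⟩ := exists_min_inv M h.norm h.ne
  have dich := conj_dich M h.norm K hKM hinv hmin
  have hcl := closure_conj h hKM hKne
  by_cases hKn : K.Normal
  · left
    have hKM' : K = M := h.min K hKM hKn hKne
    subst hKM'
    have : Nontrivial K := (Subgroup.nontrivial_iff_ne_bot K).2 hKne
    refine { eq_bot_or_eq_top_of_normal := ?_ }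
    intro A hA
    by_cases hA0 : A.map K.subtype = ⊥
    · left
      rwa [Subgroup.map_eq_bot_iff_of_injective _ K.subtype_injective] at hA0
    · right
      have := hmin (A.map K.subtype) (Subgroup.map_subtype_le A) hA0 (by
        rintro m hm _ ⟨x, hx, rfl⟩
        exact ⟨⟨m, hm⟩ * x * ⟨m, hm⟩⁻¹, hA.conj_mem x hx _, rfl⟩)
      rw [eq_top_iff]
      rintro ⟨x, hx⟩ -
      rw [← this] at hx
      obtain ⟨z, hz, hzx⟩ := hx
      have : z = ⟨x, by assumption⟩ := Subtype.ext hzx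
      rwa [← this]
  · right
    set L := Subgroup.centralizer (K : Set Q) with hLdef
    have memL : ∀ y, y ∈ L ↔ ∀ x ∈ K, x * y = y * x := fun y => Subgroup.mem_centralizer_iff
    let H : Subgroup Q :=
      { carrier := {y | ∀ x, x ∈ K ↔ y * x * y⁻¹ ∈ K}
        one_mem' := by intro x; simp
        mul_mem' := by
          intro a b ha hb x
          rw [hb, ha]
          have : a * (b * x * b⁻¹) * a⁻¹ = a * b * x * (a * b)⁻¹ := by group
          rw [this]
        inv_mem' := by
          intro a ha x
          have := ha (a⁻¹ * x * a)
          have e : a * (a⁻¹ * x * a) * a⁻¹ = x := by group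
          rw [e] at this
          simp only [inv_inv]
          exact this.symm }
    have memH : ∀ y, y ∈ H ↔ ∀ x, x ∈ K ↔ y * x * y⁻¹ ∈ K := fun y => Iff.rfl
    have hMH : M ≤ H := by
      intro m hm x
      refine ⟨hinv m hm x, fun hx => ?_⟩
      have := hinv m⁻¹ (M.inv_mem hm) _ hx
      simpa [mul_assoc] using this
    have hHK : ∀ y ∈ H, ∀ x ∈ K, y * x * y⁻¹ ∈ K := fun y hy x hx => (hy x).1 hx
    have hconj : ∀ y, y ∉ H → ∀ x ∈ K, y * x * y⁻¹ ∈ L := by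
      intro y hy x hx
      rw [memL]
      exact fun x' hx' => ((dich y).resolve_left hy) x hx x' hx'
    have hHn : H.Normal := by
      constructor
      intro z hz w
      have := hMH (comm_le_of_sup M g (h.gen M h.norm h.ne) w z)
      simpa using H.mul_mem this hz
    have hHtop : H ⊔ Subgroup.zpowers g = ⊤ := by
      rw [eq_top_iff, ← h.gen M h.norm h.ne]
      exact sup_le_sup_right hMH _
    have hcent : ∀ z, (∀ y, ∀ x ∈ K, (y * x * y⁻¹) * z = z * (y * x * y⁻¹)) → z = 1 := by
      intro z hz
      rw [← Subgroup.mem_bot, ← h.cent, Subgroup.mem_centralizer_iff]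
      intro m hm
      have hm' : m ∈ Subgroup.centralizer {z} := by
        have : M ≤ Subgroup.centralizer {z} := by
          rw [← hcl, Subgroup.closure_le]
          rintro _ ⟨y, x, hx, rfl⟩
          simp only [SetLike.mem_coe, Subgroup.mem_centralizer_iff, Set.mem_singleton_iff,
            forall_eq]
          exact (hz y x hx).symm
        exact this hm
      exact (Subgroup.mem_centralizer_iff.1 hm' z rfl).symm
    refine ⟨K, H, L, hKM, hMH, ?_, ?_, hHK, ?_, ?_, ?_, hconj, ?_, ?_⟩
    · have : ⁅K, K⁆ = K := by
        apply hmin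
        · exact Subgroup.commutator_le_self K
        · intro h0
          apply hKne
          rw [eq_bot_iff]
          intro z hz
          rw [Subgroup.mem_bot]
          apply hcent
          intro y x hx
          by_cases hy : y ∈ H
          · have hx' := hHK y hy x hx
            have : ⁅y * x * y⁻¹, z⁆ ∈ ⁅K, K⁆ := Subgroup.commutator_mem_commutator hx' hz
            rw [h0, Subgroup.mem_bot] at this
            exact commutatorElement_eq_one_iff_mul_comm.1 this
          · exact ((memL _).1 (hconj y hy x hx) z hz).symm
        · intro m hm z hz
          have hle : ⁅K, K⁆ ≤ (⁅K, K⁆).comap (MulAut.conj m).toMonoidHom := by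
            rw [Subgroup.commutator_le]
            intro a ha b hb
            rw [Subgroup.mem_comap, map_commutatorElement]
            exact Subgroup.commutator_mem_commutator (hinv m hm a ha) (hinv m hm b hb)
          exact hle hz
      exact this.ge
    · intro y
      rw [memL]
      refine forall₂_congr fun x _ => ?_
      rw [mul_inv_eq_one, mul_inv_eq_iff_eq_mul, eq_comm]
    · intro y hy x
      have hyc := (memL y).1 hy
      have hyc' := (memL _).1 (L.inv_mem hy)
      constructor
      · intro hx
        rw [← hyc x hx]; simpa using hx
      · intro hx
        have := hyc' _ hx
        have e : x = y * x * y⁻¹ := by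
          calc x = y⁻¹ * (y * x * y⁻¹) * y := by group
            _ = _ := by rw [← this]; group
        rw [e]; exact hx
    · have := relIndex_sup_zpowers H g
      rwa [hHtop, Subgroup.relIndex_top_right] at this
    · rw [Ne, Subgroup.index_eq_one]
      intro ht
      apply hKn
      constructor
      intro x hx y
      exact hHK y (ht ▸ Subgroup.mem_top y) x hx
    · intro m hm
      rw [← hcl] at hm
      induction hm using Subgroup.closure_induction with
      | mem z hz =>
        obtain ⟨y, x, hx, rfl⟩ := hz
        by_cases hy : y ∈ H
        · exact ⟨1, L.one_mem, _, hHK y hy x hx, by simp⟩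
        · exact ⟨_, hconj y hy x hx, 1, K.one_mem, by simp⟩
      | one => exact ⟨1, L.one_mem, 1, K.one_mem, by simp⟩
      | mul a b _ _ ha hb =>
        obtain ⟨l, hl, x, hx, rfl⟩ := ha
        obtain ⟨l', hl', x', hx', rfl⟩ := hb
        refine ⟨l * l', L.mul_mem hl hl', x * x', K.mul_mem hx hx', ?_⟩
        have := (memL l').1 hl' x hx
        calc l * x * (l' * x') = l * (x * l') * x' := by group
          _ = _ := by rw [this]; group
      | inv a _ ha =>
        obtain ⟨l, hl, x, hx, rfl⟩ := ha
        refine ⟨l⁻¹, L.inv_mem hl, x⁻¹, K.inv_mem hx, ?_⟩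
        have := (memL l).1 hl x hx
        rw [← mul_inv_rev, this]
    · intro j hj
      set z := (g ^ H.index) ^ j with hz
      apply hcent
      intro y x hx
      have hy : y ∈ Subgroup.zpowers g ⊔ M := by
        rw [sup_comm, h.gen M h.norm h.ne]; trivial
      rw [Subgroup.mem_sup_of_normal_right] at hy
      obtain ⟨_, ⟨i, rfl⟩, m, hm, rfl⟩ := hy
      simp only
      have h1 := (memL z).1 hj _ (hinv m hm x hx)
      set x' := m * x * m⁻¹
      have hzg : g ^ i * z = z * g ^ i := by
        rw [hz, ← pow_mul, ← zpow_natCast, ← zpow_add, ← zpow_add, add_comm]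
      have e : g ^ i * m * x * (g ^ i * m)⁻¹ = g ^ i * x' * (g ^ i)⁻¹ := by
        simp only [x']; group
      rw [e]
      generalize g ^ i = w at *
      have hzg' : w⁻¹ * z = z * w⁻¹ := by
        rw [inv_mul_eq_iff_eq_mul, ← mul_assoc, hzg]; group
      calc w * x' * w⁻¹ * z = w * x' * (w⁻¹ * z) := by group
        _ = w * (x' * z) * w⁻¹ := by rw [hzg']; group
        _ = (w * z) * x' * w⁻¹ := by rw [h1]; group
        _ = _ := by rw [hzg]; group
end GT
end CT

namespace CT
open Module CategoryTheory

section FD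
variable {G : Type} [Group G]

/-- build a morphism -/
noncomputable def mkHom (X Y : FDRep ℂ G) (l : X →ₗ[ℂ] Y) (h : ∀ g x, l (X.ρ g x) = Y.ρ g (l x)) : X ⟶ Y :=
  ⟨InducedCategory.homMk (ModuleCat.ofHom l), fun g => by
    ext x
    exact h g x⟩

/-- underlying linear map -/
noncomputable def lin {X Y : FDRep ℂ G} (f : X ⟶ Y) : X →ₗ[ℂ] Y := f.hom.hom.hom

theorem lin_mkHom (X Y : FDRep ℂ G) (l : X →ₗ[ℂ] Y) (h) : lin (mkHom X Y l h) = l := rfl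

theorem lin_comm {X Y : FDRep ℂ G} (f : X ⟶ Y) (g : G) (x : X) :
    lin f (X.ρ g x) = Y.ρ g (lin f x) :=
  ConcreteCategory.congr_hom ((forget (FGModuleCat ℂ)).congr_map (f.comm g)) x

theorem lin_ext {X Y : FDRep ℂ G} {f f' : X ⟶ Y} (h : lin f = lin f') : f = f' := by
  ext x
  exact LinearMap.congr_fun h x

theorem lin_zero (X Y : FDRep ℂ G) : lin (0 : X ⟶ Y) = 0 := rfl
theorem lin_comp {X Y Z : FDRep ℂ G} (f : X ⟶ Y) (f' : Y ⟶ Z) : lin (f ≫ f') = lin f' ∘ₗ lin f := rfl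
theorem lin_id (X : FDRep ℂ G) : lin (𝟙 X) = LinearMap.id := rfl

theorem lin_inj_of_mono {X Y : FDRep ℂ G} (f : X ⟶ Y) [Mono f] : Function.Injective (lin f) := by
  rw [← LinearMap.ker_eq_bot]
  have hst : Stab X.ρ ⊤ (LinearMap.ker (lin f)) := by
    intro g _ v hv
    rw [LinearMap.mem_ker] at hv ⊢
    rw [lin_comm, hv, map_zero]
  let σ : G →* (LinearMap.ker (lin f) →ₗ[ℂ] LinearMap.ker (lin f)) :=
    (subRep X.ρ ⊤ _ hst).comp (Subgroup.topEquiv.symm.toMonoidHom)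
  let ι : FDRep.of σ ⟶ X := mkHom _ _ (LinearMap.ker (lin f)).subtype (fun g x => rfl)
  have : ι ≫ f = 0 ≫ f := by
    apply lin_ext
    rw [lin_comp, lin_comp, lin_zero]
    ext x
    rw [LinearMap.comp_zero]
    exact x.2
  have h0 := (cancel_mono f).1 this
  rw [Submodule.eq_bot_iff]
  intro x hx
  have := LinearMap.congr_fun (congrArg lin h0) (⟨x, hx⟩ : LinearMap.ker (lin f))
  exact this

theorem mono_of_lin_inj {X Y : FDRep ℂ G} (f : X ⟶ Y) (h : Function.Injective (lin f)) : Mono f := by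
  constructor
  intro Z a b hab
  apply lin_ext
  ext z
  apply h
  exact LinearMap.congr_fun (congrArg lin hab) z

theorem isIso_of_lin_bij {X Y : FDRep ℂ G} (f : X ⟶ Y) (h : Function.Bijective (lin f)) : IsIso f := by
  let e := LinearEquiv.ofBijective (lin f) h
  refine ⟨mkHom Y X e.symm.toLinearMap ?_, ?_, ?_⟩
  · intro g y
    apply h.1
    rw [lin_comm]
    have e1 : ∀ y, lin f (e.symm y) = y := fun y => e.apply_symm_apply y
    exact (e1 _).trans (by rw [LinearEquiv.coe_coe, e1])
  · apply lin_ext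
    ext x
    exact e.symm_apply_apply x
  · apply lin_ext
    ext x
    exact e.apply_symm_apply x

theorem MinS_of_simple (V : FDRep ℂ G) (hV : Simple V) : MinS V.ρ ⊤ ⊤ := by
  refine ⟨?_, fun _ _ _ _ => trivial, ?_⟩
  · intro h
    apply id_nonzero V
    apply lin_ext
    ext x
    have hx : x ∈ (⊤ : Submodule ℂ V) := trivial
    rw [h] at hx
    exact (Submodule.mem_bot ℂ).1 hx
  · intro U _ hst hne
    let σ : G →* (U →ₗ[ℂ] U) :=
      (subRep V.ρ ⊤ _ hst).comp (Subgroup.topEquiv.symm.toMonoidHom)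
    let ι : FDRep.of σ ⟶ V := mkHom _ _ U.subtype (fun g x => rfl)
    have hm : Mono ι := mono_of_lin_inj ι U.injective_subtype
    have h0 : ι ≠ 0 := by
      intro h
      apply hne
      rw [Submodule.eq_bot_iff]
      intro x hx
      exact LinearMap.congr_fun (congrArg lin h) (⟨x, hx⟩ : U)
    have := isIso_of_mono_of_nonzero h0
    rw [eq_top_iff]
    intro x _
    have h1 : lin (inv ι ≫ ι) x = x := by rw [IsIso.inv_hom_id]; rfl
    rw [← h1]
    exact (lin (inv ι) x).2

theorem simple_of_MinS {V : Type} [AddCommGroup V] [Module ℂ V] [FiniteDimensional ℂ V]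
    (ρ : G →* (V →ₗ[ℂ] V)) (h : MinS ρ ⊤ ⊤) : Simple (FDRep.of ρ) := by
  constructor
  intro Y f hf
  constructor
  · intro hi h0
    apply h.ne
    rw [Submodule.eq_bot_iff]
    intro x _
    have h1 : lin (inv f ≫ f) x = x := by rw [IsIso.inv_hom_id]; rfl
    have h2 : lin f = 0 := by rw [h0]; exact lin_zero _ _
    rw [← h1, lin_comp, LinearMap.comp_apply, h2]; rfl
  · intro h0
    apply isIso_of_lin_bij
    refine ⟨lin_inj_of_mono f, ?_⟩
    rw [← LinearMap.range_eq_top]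
    apply h.min _ le_top
    · rintro g _ _ ⟨y, rfl⟩
      exact ⟨Y.ρ g y, lin_comm f g y⟩
    · intro hr
      apply h0
      apply lin_ext
      rw [lin_zero]
      exact LinearMap.range_eq_bot.1 hr
end FD
end CT

namespace CT
open Module CategoryTheory

section B1
variable {G : Type} [Group G] {V : Type} [AddCommGroup V] [Module ℂ V] [FiniteDimensional ℂ V]

theorem gamma_exists (ρ : G →* (V →ₗ[ℂ] V)) (N : Subgroup G) [hN : N.Normal] [Finite (G ⧸ N)]
    (hsc : Sc ρ N) (hS : ∀ x, (∃ c : ℂ, ρ x = c • 1) → x ∈ N) (hd : finrank ℂ V ≠ 0) :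
    ∃ (Γ : Type) (_ : Group Γ) (φ : Γ →* G ⧸ N) (π : Γ →* (V →ₗ[ℂ] V)), Finite Γ ∧
      Function.Surjective φ ∧ Function.Injective π ∧
      ∀ γ g, φ γ = QuotientGroup.mk g → ∃ c : ℂ, c ≠ 0 ∧ π γ = c • ρ g := by
  have hnt : Nontrivial V := Module.nontrivial_of_finrank_pos (Nat.pos_of_ne_zero hd)
  have hdet : ∀ x, LinearMap.det (ρ x) ≠ 0 := by
    intro x h0
    have := congrArg LinearMap.det (rho_unit ρ x)
    rw [map_mul, h0, zero_mul, map_one] at this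
    exact zero_ne_one this
  have hne : ∀ x, ρ x ≠ 0 := by
    intro x h0
    have := rho_unit ρ x
    rw [h0, zero_mul] at this
    exact zero_ne_one this
  let Γ : Subgroup ((G ⧸ N) × (V →ₗ[ℂ] V)ˣ) :=
    { carrier := {p | LinearMap.det (p.2 : V →ₗ[ℂ] V) = 1 ∧ ∃ g : G, ∃ c : ℂ,
        (QuotientGroup.mk g : G ⧸ N) = p.1 ∧ (p.2 : V →ₗ[ℂ] V) = c • ρ g}
      one_mem' := ⟨by simp, 1, 1, rfl, by simp⟩
      mul_mem' := by
        rintro ⟨q, u⟩ ⟨q', u'⟩ ⟨h1, g, c, h2, h3⟩ ⟨h1', g', c', h2', h3'⟩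
        simp only at h1 h2 h3 h1' h2' h3'
        refine ⟨?_, g * g', c * c', ?_, ?_⟩
        · simp [h1, h1']
        · simp [← h2, ← h2']
        · simp only [Prod.mk_mul_mk, Units.val_mul, h3, h3', map_mul, smul_mul_smul_comm]
      inv_mem' := by
        rintro ⟨q, u⟩ ⟨h1, g, c, h2, h3⟩
        simp only at h1 h2 h3
        have hc : c ≠ 0 := by
          rintro rfl
          rw [zero_smul] at h3
          exact u.ne_zero h3
        refine ⟨?_, g⁻¹, c⁻¹, ?_, ?_⟩
        · have := congrArg LinearMap.det (u.mul_inv)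
          rw [map_mul, h1, one_mul, map_one] at this
          exact this
        · simp [← h2]
        · simp only [Prod.inv_mk]
          apply Units.inv_eq_of_mul_eq_one_right
          rw [h3, smul_mul_smul_comm, rho_unit, mul_inv_cancel₀ hc, one_smul] }
  let φ : Γ →* G ⧸ N := (MonoidHom.fst _ _).comp Γ.subtype
  let π : Γ →* (V →ₗ[ℂ] V) := (Units.coeHom _).comp ((MonoidHom.snd _ _).comp Γ.subtype)
  have hc : ∀ γ g, φ γ = QuotientGroup.mk g → ∃ c : ℂ, c ≠ 0 ∧ π γ = c • ρ g := by
    rintro ⟨⟨q, u⟩, h1, g, c, h2, h3⟩ g' (hg : q = QuotientGroup.mk g')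
    simp only at h1 h2 h3
    rw [hg, eq_comm, QuotientGroup.eq] at h2
    obtain ⟨b, hb⟩ := hsc _ h2
    have e : u.val = (c * b) • ρ g' := by
      have : g = g' * (g'⁻¹ * g) := by group
      rw [h3, this, map_mul, hb, mul_smul_comm, mul_one, smul_smul]
    refine ⟨c * b, ?_, e⟩
    intro h0
    rw [h0, zero_smul] at e
    exact u.ne_zero e
  have hdet1 : ∀ γ, LinearMap.det (π γ) = 1 := fun γ => γ.2.1
  have hsurj : Function.Surjective φ := by
    intro q
    obtain ⟨x, rfl⟩ := QuotientGroup.mk_surjective q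
    obtain ⟨c, hc⟩ := IsAlgClosed.exists_pow_nat_eq (LinearMap.det (ρ x))⁻¹ (Nat.pos_of_ne_zero hd)
    have hc0 : c ≠ 0 := by
      rintro rfl
      rw [zero_pow hd, eq_comm, inv_eq_zero] at hc
      exact hdet x hc
    let u : (V →ₗ[ℂ] V)ˣ := ⟨c • ρ x, c⁻¹ • ρ x⁻¹,
      by rw [smul_mul_smul_comm, rho_unit, mul_inv_cancel₀ hc0, one_smul],
      by rw [smul_mul_smul_comm, rho_unit', inv_mul_cancel₀ hc0, one_smul]⟩
    refine ⟨⟨(QuotientGroup.mk x, u), ?_, x, c, rfl, rfl⟩, rfl⟩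
    change LinearMap.det (c • ρ x) = 1
    rw [LinearMap.det_smul, hc, inv_mul_cancel₀ (hdet x)]
  have hinj : Function.Injective π := by
    rw [injective_iff_map_eq_one]
    intro γ hγ
    obtain ⟨x, hx⟩ := QuotientGroup.mk_surjective (φ γ)
    obtain ⟨c, hc0, hcx⟩ := hc γ x hx.symm
    have hxN : x ∈ N := by
      apply hS
      refine ⟨c⁻¹, ?_⟩
      rw [← hγ, hcx, smul_smul, inv_mul_cancel₀ hc0, one_smul]
    apply Subtype.ext
    apply Prod.ext
    · exact hx.symm.trans ((QuotientGroup.eq_one_iff x).2 hxN)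
    · exact Units.ext hγ
  refine ⟨Γ, inferInstance, φ, π, ?_, hsurj, hinj, hc⟩
  have hroots : {c : ℂ | c ^ finrank ℂ V = 1}.Finite := by
    have : {c : ℂ | c ^ finrank ℂ V = 1} ⊆ ((Polynomial.nthRoots (finrank ℂ V) (1 : ℂ)).toFinset : Set ℂ) := by
      intro c hc
      simp only [Finset.mem_coe, Multiset.mem_toFinset]
      exact (Polynomial.mem_nthRoots (Nat.pos_of_ne_zero hd)).2 hc
    exact (Finset.finite_toSet _).subset this
  have hker : ∀ γ : φ.ker, ∃ c : ℂ, c ^ finrank ℂ V = 1 ∧ π γ = c • 1 := by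
    intro γ
    obtain ⟨c, -, h⟩ := hc γ 1 γ.2
    rw [map_one] at h
    refine ⟨c, ?_, h⟩
    have := hdet1 γ
    rwa [h, LinearMap.det_smul, map_one, mul_one] at this
  choose f hf1 hf2 using hker
  have : Finite φ.ker := by
    have := hroots.to_subtype
    refine Finite.of_injective (fun γ => (⟨f γ, hf1 γ⟩ : {c : ℂ | c ^ finrank ℂ V = 1})) ?_
    intro a b hab
    have : f a = f b := congrArg Subtype.val hab
    apply Subtype.ext
    apply hinj
    rw [hf2, hf2, this]
  have : Finite (Γ ⧸ φ.ker) :=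
    Finite.of_equiv _ (QuotientGroup.quotientKerEquivOfSurjective φ hsurj).symm.toEquiv
  exact Finite.of_subgroup_quotient φ.ker

theorem solvableResidual_eq (Γ : Type) [Group Γ] [Finite Γ] :
    ∃ k, solvableResidual Γ = derivedSeries Γ k := by
  have hfin : (Set.range (derivedSeries Γ)).Finite := Set.toFinite _
  obtain ⟨_, ⟨⟨k, rfl⟩, hk⟩⟩ := hfin.exists_minimal ⟨_, 0, rfl⟩
  refine ⟨k, le_antisymm (iInf_le _ k) (le_iInf fun m => ?_)⟩
  have h1 : derivedSeries Γ (max k m) ≤ derivedSeries Γ k :=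
    derivedSeries_antitone Γ (le_max_left _ _)
  exact (hk ⟨_, rfl⟩ h1).trans (derivedSeries_antitone Γ (le_max_right _ _))

theorem caseB1 (hyp : Conjecture21) (n : ℕ) (hn0 : n ≠ 0) (ρ : G →* (V →ₗ[ℂ] V)) (N : Subgroup G)
    [hN : N.Normal] (hn : N.index = n) (hV : MinS ρ ⊤ ⊤) (hsc : Sc ρ N)
    (hS : ∀ x, (∃ c : ℂ, ρ x = c • 1) → x ∈ N)
    (g : G) (r : ℕ) (htr : LinearMap.trace ℂ V (ρ g) ≠ 0) (hr : OM N g r)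
    (M : Subgroup (G ⧸ N)) (hM : MinNorm M (QuotientGroup.mk g)) (hsimp : IsSimpleGroup M)
    (hMV : MinS ρ (M.comap (QuotientGroup.mk' N)) ⊤) : r * finrank ℂ V ∣ n := by
  have hfin : Finite (G ⧸ N) := by
    apply Nat.finite_of_card_ne_zero
    change N.index ≠ 0
    rwa [hn]
  have hd : finrank ℂ V ≠ 0 := by
    have := finrank_pos_of_min hV
    rw [finrank_top] at this
    omega
  obtain ⟨Γ, _, φ, π, hΓ, hφ, hπ, hc⟩ := gamma_exists ρ N hsc hS hd
  have hMn := hM.norm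
  have hcen : Subgroup.center Γ = φ.ker := by
    ext γ
    rw [MonoidHom.mem_ker, Subgroup.mem_center_iff]
    constructor
    · intro h
      obtain ⟨x, hx⟩ := QuotientGroup.mk_surjective (φ γ)
      obtain ⟨c, hc0, hcx⟩ := hc γ x hx.symm
      rw [← hx, QuotientGroup.eq_one_iff]
      apply hS
      apply schur ρ ⊤ hV
      intro y _
      obtain ⟨δ, hδ⟩ := hφ (QuotientGroup.mk y)
      obtain ⟨b, hb0, hb⟩ := hc δ y hδ
      have := congrArg π (h δ)
      rw [map_mul, map_mul, hb, hcx, smul_mul_smul_comm, smul_mul_smul_comm, mul_comm c b] at this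
      exact (smul_right_injective _ (mul_ne_zero hb0 hc0) this).symm
    · intro h δ
      obtain ⟨c, -, hcx⟩ := hc γ 1 h
      apply hπ
      rw [map_mul, map_mul, hcx, map_one, smul_mul_assoc, mul_smul_comm, one_mul, mul_one]
  let e : Γ ⧸ Subgroup.center Γ ≃* G ⧸ N :=
    (QuotientGroup.quotientMulEquivOfEq hcen).trans (QuotientGroup.quotientKerEquivOfSurjective φ hφ)
  have he : ∀ γ : Γ, e (QuotientGroup.mk γ) = φ γ := fun γ => rfl
  obtain ⟨γ, hγ⟩ := hφ (QuotientGroup.mk g)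
  have hMM : ⁅M, M⁆ = M := by
    apply hM.min _ (Subgroup.commutator_le_left M M) inferInstance
    intro h0
    obtain ⟨a, ha, b, hb, hab⟩ := hM.nonab
    apply hab
    have := Subgroup.commutator_mem_commutator ha hb
    rw [h0, Subgroup.mem_bot] at this
    exact commutatorElement_eq_one_iff_mul_comm.1 this
  have hder : ∀ k, M ≤ (derivedSeries Γ k).map φ := by
    intro k
    induction k with
    | zero =>
      rw [derivedSeries_zero, ← MonoidHom.range_eq_map, MonoidHom.range_eq_top.2 hφ]
      exact le_top
    | succ k ih =>
      rw [derivedSeries_succ, Subgroup.map_commutator]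
      calc M = ⁅M, M⁆ := hMM.symm
        _ ≤ _ := Subgroup.commutator_mono ih ih
  have hres : M ≤ (solvableResidual Γ).map φ := by
    obtain ⟨k, hk⟩ := solvableResidual_eq Γ
    rw [hk]; exact hder k
  have hπV : MinS π (solvableResidual Γ) ⊤ := by
    refine ⟨hV.ne, fun _ _ _ _ => trivial, fun U hU hst hne => hMV.min U hU ?_ hne⟩
    intro x hx v hv
    obtain ⟨δ, hδ, hδx⟩ := hres hx
    obtain ⟨c, hc0, hcx⟩ := hc δ x hδx
    have := U.smul_mem c⁻¹ (hst δ hδ v hv)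
    rwa [hcx, LinearMap.smul_apply, smul_smul, inv_mul_cancel₀ hc0, one_smul] at this
  have key := hyp Γ ?_ (FDRep.of π) ?_ hπ ?_ γ ?_ ?_
  · have h1 : (Subgroup.center Γ).index = n := by
      rw [← hn]
      exact Nat.card_congr e.toEquiv
    have h2 : orderOf (QuotientGroup.mk γ : Γ ⧸ Subgroup.center Γ) = r := by
      rw [← MulEquiv.orderOf_eq e, he, hγ]
      exact OM.unique (OM.exists N g) hr
    rw [h1, h2] at key
    exact key
  · refine ⟨M.comap e.toMonoidHom, inferInstance, ?_, ?_, ?_⟩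
    · have e' : M.comap e.toMonoidHom ≃* M :=
        { toFun := fun x => ⟨e x, x.2⟩
          invFun := fun x => ⟨e.symm x, by simp [Subgroup.mem_comap]⟩
          left_inv := fun x => Subtype.ext (e.symm_apply_apply _)
          right_inv := fun x => by simp
          map_mul' := fun x y => Subtype.ext (map_mul e x.1 y.1) }
      exact e'.isSimpleGroup
    · obtain ⟨a, ha, b, hb, hab⟩ := hM.nonab
      refine ⟨⟨e.symm a, by simpa [Subgroup.mem_comap] using ha⟩,
        ⟨e.symm b, by simpa [Subgroup.mem_comap] using hb⟩, ?_⟩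
      intro h
      apply hab
      have h' : e.symm a * e.symm b = e.symm b * e.symm a := congrArg Subtype.val h
      rw [← map_mul, ← map_mul] at h'
      exact e.symm.injective h'
    · rw [eq_bot_iff]
      intro z hz
      rw [Subgroup.mem_centralizer_iff] at hz
      have : e z ∈ Subgroup.centralizer (M : Set (G ⧸ N)) := by
        rw [Subgroup.mem_centralizer_iff]
        intro m hm
        have := congrArg e (hz (e.symm m) (by simpa [Subgroup.mem_comap] using hm))
        simpa using this
      rw [hM.cent, Subgroup.mem_bot] at this
      rw [Subgroup.mem_bot]
      exact e.injective (by rw [this, map_one])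
  · apply simple_of_MinS
    exact hπV.mono le_top
  · apply simple_of_MinS
    refine ⟨hπV.ne, fun _ _ _ _ => trivial, fun U hU hst hne => hπV.min U hU ?_ hne⟩
    intro x hx v hv
    exact hst ⟨x, hx⟩ trivial v hv
  · change LinearMap.trace ℂ V (π γ) ≠ 0
    obtain ⟨c, hc0, hcx⟩ := hc γ g hγ
    rw [hcx, map_smul, smul_eq_mul]
    exact mul_ne_zero hc0 htr
  · rw [eq_top_iff]
    intro δ _
    have hle : M ⊔ Subgroup.zpowers (QuotientGroup.mk g) ≤
        (solvableResidual Γ ⊔ Subgroup.zpowers γ).map φ := by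
      rw [Subgroup.map_sup]
      apply sup_le_sup hres
      rw [MonoidHom.map_zpowers, hγ]
    rw [hM.gen M hM.norm hM.ne] at hle
    obtain ⟨s, hs, hsδ⟩ := hle (Subgroup.mem_top (φ δ))
    have hz : s⁻¹ * δ ∈ Subgroup.center Γ := by
      rw [hcen, MonoidHom.mem_ker, map_mul, map_inv, hsδ, inv_mul_cancel]
    have : δ = s * (s⁻¹ * δ) := by group
    rw [this]
    apply Subgroup.mul_mem
    · exact (sup_le (le_sup_left.trans le_sup_left) le_sup_right :
        solvableResidual Γ ⊔ Subgroup.zpowers γ ≤ _) hs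
    · exact (le_sup_right.trans le_sup_left : Subgroup.center Γ ≤ _) hz
end B1
end CT

namespace CT
open Module CategoryTheory

section Fin
variable {G : Type} [Group G] {V : Type} [AddCommGroup V] [Module ℂ V] [FiniteDimensional ℂ V]

theorem comap_index (N : Subgroup G) [N.Normal] (H : Subgroup (G ⧸ N)) :
    (H.comap (QuotientGroup.mk' N)).index = H.index :=
  Subgroup.index_comap_of_surjective _ (QuotientGroup.mk'_surjective N)

theorem caseB (hyp : Conjecture21) (n : ℕ) (hn0 : n ≠ 0) (hP : ∀ m < n, P m) (hT : ∀ m < n, T m)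
    (ρ : G →* (V →ₗ[ℂ] V)) (N : Subgroup G)
    [hN : N.Normal] (hn : N.index = n) (hV : MinS ρ ⊤ ⊤) (hsc : Sc ρ N)
    (hS : ∀ x, (∃ c : ℂ, ρ x = c • 1) → x ∈ N)
    (g : G) (r : ℕ) (htr : LinearMap.trace ℂ V (ρ g) ≠ 0) (hr : OM N g r)
    (M : Subgroup (G ⧸ N)) (hM : MinNorm M (QuotientGroup.mk g))
    (hMV : MinS ρ (M.comap (QuotientGroup.mk' N)) ⊤) : r * finrank ℂ V ∣ n := by
  have hfin : Finite (G ⧸ N) := by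
    apply Nat.finite_of_card_ne_zero
    change N.index ≠ 0
    rwa [hn]
  rcases grp M _ hM with hs | ⟨K, H, L, hKM, hMH, hKp, hL, hHK, hLH, hk, hk1, hconj, hgen, hfaith⟩
  · exact caseB1 hyp n hn0 ρ N hn hV hsc hS g r htr hr M hM hs hMV
  · set q := QuotientGroup.mk' N with hq
    have hqs : Function.Surjective q := QuotientGroup.mk'_surjective N
    have hq1 : ∀ x, q x = 1 ↔ x ∈ N := fun x => QuotientGroup.eq_one_iff x
    have hker : ∀ A : Subgroup (G ⧸ N), N ≤ A.comap q := by
      intro A x hx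
      rw [Subgroup.mem_comap, (hq1 x).2 hx]
      exact A.one_mem
    have hg : (QuotientGroup.mk g : G ⧸ N) = q g := rfl
    rw [hg] at hk hfaith
    have hidx : (H.comap q).index = H.index := comap_index N H
    apply caseB2 n hn0 hP hT ρ N hN hn hsc g r htr hr (M.comap q) (K.comap q) (H.comap q)
      (L.comap q) hMV (hker K) (Subgroup.comap_mono hKM) (Subgroup.comap_mono hMH)
    · intro x hx
      have h1 : q x ∈ (⁅K.comap q, K.comap q⁆).map q := by
        rw [Subgroup.map_commutator, Subgroup.map_comap_eq_self_of_surjective hqs]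
        exact hKp hx
      obtain ⟨y, hy, hyx⟩ := h1
      have : x = y * (y⁻¹ * x) := by group
      rw [this]
      refine Subgroup.mul_mem_sup hy ?_
      rw [← hq1, map_mul, map_inv, hyx, inv_mul_cancel]
    · intro y
      rw [Subgroup.mem_comap, hL]
      constructor
      · intro h x hx
        rw [← hq1]
        simpa using h (q x) hx
      · intro h x hx
        obtain ⟨x, rfl⟩ := hqs x
        have := (hq1 _).2 (h x hx)
        simpa using this
    · intro y hy x hx
      simpa [Subgroup.mem_comap] using hHK (q y) hy (q x) hx
    · exact Subgroup.comap_mono hLH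
    · intro j
      rw [hidx, hk j, Subgroup.mem_comap, map_pow]
    · rwa [hidx]
    · intro y hy x hx
      rw [Subgroup.mem_comap, map_mul, map_mul, map_inv]
      exact hconj (q y) hy (q x) hx
    · intro m hm
      obtain ⟨l, hl, x, hx, h⟩ := hgen (q m) hm
      obtain ⟨x, rfl⟩ := hqs x
      refine ⟨m * x⁻¹, ?_, x, hx, by group⟩
      rw [Subgroup.mem_comap, map_mul, map_inv, h, mul_inv_cancel_right]
      exact hl
    · intro j hj
      rw [hidx] at hj ⊢
      rw [Subgroup.mem_comap, map_pow, map_pow] at hj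
      rw [← hq1, map_pow, map_pow]
      exact hfaith j hj

theorem P_step (hyp : Conjecture21) (n : ℕ) (hP : ∀ m < n, P m) (hT : ∀ m < n, T m) : P n := by
  intro G V _ _ _ _ ρ N hN hn hV hsc g r htr hr
  by_cases hn0 : n = 0
  · rw [hn0]; exact dvd_zero _
  have hfin : Finite (G ⧸ N) := by
    apply Nat.finite_of_card_ne_zero
    change N.index ≠ 0
    rwa [hn]
  by_cases hd : finrank ℂ V = 1
  · rw [hd, mul_one, OM.unique hr (OM.exists N g), ← hn]
    exact orderOf_dvd_natCard _
  by_contra hcon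
  have hcl : ∀ M : Subgroup G, M.Normal → N < M → M ⊔ Subgroup.zpowers g = ⊤ ∧ MinS ρ M ⊤ :=
    fun M hM hNM => (claim n hn0 hP hT ρ N hN hn hV hsc g r htr hr M hM hNM).resolve_left hcon
  have hscal : ∀ A : Subgroup G, Sc ρ A → ¬ MinS ρ A ⊤ := by
    intro A hA hm
    apply hd
    have hpos := finrank_pos_of_min hV
    rw [finrank_top] at hpos
    have : Nontrivial V := Module.nontrivial_of_finrank_pos hpos
    obtain ⟨v, hv⟩ := exists_ne (0 : V)
    have h1 : (ℂ ∙ v) = ⊤ := by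
      apply hm.min _ le_top
      · intro x hx w hw
        obtain ⟨c, hc⟩ := hA x hx
        rw [hc]
        exact (ℂ ∙ v).smul_mem c hw
      · rwa [Ne, Submodule.span_singleton_eq_bot]
    rw [← finrank_top ℂ V, ← h1, finrank_span_singleton hv]
  have hS : ∀ x, (∃ c : ℂ, ρ x = c • 1) → x ∈ N := by
    let N' : Subgroup G :=
      { carrier := {x | ∃ c : ℂ, ρ x = c • 1}
        one_mem' := ⟨1, by simp⟩
        mul_mem' := by
          rintro a b ⟨c, hc⟩ ⟨c', hc'⟩
          exact ⟨c * c', by rw [map_mul, hc, hc', smul_mul_smul_comm, mul_one]⟩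
        inv_mem' := by
          rintro a ⟨c, hc⟩
          have hu := rho_unit ρ a
          rw [hc, smul_mul_assoc, one_mul] at hu
          by_cases hc0 : c = 0
          · rw [hc0, zero_smul] at hu
            exact ⟨0, by rw [← one_mul (ρ a⁻¹), ← hu]; simp⟩
          · exact ⟨c⁻¹, by rw [← hu, smul_smul, inv_mul_cancel₀ hc0, one_smul]⟩ }
    have hN'n : N'.Normal := by
      constructor
      rintro x ⟨c, hc⟩ y
      exact ⟨c, by rw [map_mul, map_mul, hc, mul_smul_comm, mul_one, smul_mul_assoc, rho_unit]⟩
    have hle : N ≤ N' := hsc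
    intro x hx
    by_contra hxN
    have hlt : N < N' := lt_of_le_of_ne hle (fun h => hxN (h ▸ (show x ∈ N' from hx)))
    exact hscal N' (fun _ h => h) (hcl N' hN'n hlt).2
  set q := QuotientGroup.mk' N with hq
  have hqs : Function.Surjective q := QuotientGroup.mk'_surjective N
  have hq1 : ∀ x, q x = 1 ↔ x ∈ N := fun x => QuotientGroup.eq_one_iff x
  have hlt : ∀ A : Subgroup (G ⧸ N), A ≠ ⊥ → N < A.comap q := by
    intro A hA
    refine lt_of_le_of_ne ?_ ?_
    · intro x hx
      rw [Subgroup.mem_comap, (hq1 x).2 hx]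
      exact A.one_mem
    · intro h
      apply hA
      rw [eq_bot_iff]
      intro z hz
      obtain ⟨x, rfl⟩ := hqs z
      rw [Subgroup.mem_bot, hq1, h]
      exact hz
  have htop : (⊤ : Subgroup (G ⧸ N)) ≠ ⊥ := by
    intro h
    apply hscal ⊤ _ hV
    intro x _
    apply hsc
    rw [← hq1, ← Subgroup.mem_bot, ← h]
    trivial
  have hfs : {A : Subgroup (G ⧸ N) | A.Normal ∧ A ≠ ⊥}.Finite := Set.toFinite _
  obtain ⟨M, ⟨hMn, hMne⟩, hMmin⟩ := hfs.exists_minimal ⟨⊤, inferInstance, htop⟩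
  have hNM := hlt M hMne
  have hMc := hcl _ (hMn.comap q) hNM
  by_cases hab : ∀ x ∈ M, ∀ y ∈ M, x * y = y * x
  · refine hcon (caseA n hn0 ρ N hN hn hsc hS g r hr hd (M.comap q) (hMn.comap q) hNM hMc.2 hMc.1
      ?_ ?_)
    · intro M' hM' hM'n hNM'
      refine le_antisymm hM' ?_
      have hn1 : (M'.map q).Normal := hM'n.map q hqs
      have hne : M'.map q ≠ ⊥ := by
        intro h
        apply hNM'.not_ge
        intro x hx
        rw [← hq1, ← Subgroup.mem_bot, ← h]
        exact Subgroup.mem_map_of_mem q hx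
      have := hMmin ⟨hn1, hne⟩ (Subgroup.map_le_iff_le_comap.2 hM')
      intro x hx
      obtain ⟨y, hy, hyx⟩ := this hx
      have e : x = y * (y⁻¹ * x) := by group
      rw [e]
      refine M'.mul_mem hy (hNM'.le ?_)
      rw [← hq1, map_mul, map_inv, hyx, inv_mul_cancel]
    · intro x hx y hy
      rw [← hq1]
      have := hab (q x) hx (q y) hy
      simp only [map_mul, map_inv, this]
      group
  · push Not at hab
    refine hcon (caseB hyp n hn0 hP hT ρ N hn hV hsc hS g r htr hr M ⟨hMn, hMne, ?_, hab, ?_⟩ hMc.2)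
    · intro M' h1 h2 h3
      exact le_antisymm h1 (hMmin ⟨h2, h3⟩ h1)
    · intro A hA hAne
      have := congrArg (Subgroup.map q) (hcl _ (hA.comap q) (hlt A hAne)).1
      rw [Subgroup.map_sup, Subgroup.map_comap_eq_self_of_surjective hqs, MonoidHom.map_zpowers,
        Subgroup.map_top_of_surjective q hqs] at this
      exact this

theorem PT_all (hyp : Conjecture21) (n : ℕ) : P n ∧ T n := by
  induction n using Nat.strong_induction_on with
  | _ n ih =>
    have hPn := P_step hyp n (fun m hm => (ih m hm).1) (fun m hm => (ih m hm).2)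
    refine ⟨hPn, ?_⟩
    by_cases hn0 : n = 0
    · subst hn0
      intro G V _ _ _ _ ρ N hN hn hV W hW g r htr hr
      rw [zero_mul]; exact dvd_zero _
    · apply T_of_P
      intro m hm
      rcases (Nat.le_of_dvd (Nat.pos_of_ne_zero hn0) hm).lt_or_eq with h | h
      · exact (ih m h).1
      · exact h ▸ hPn

theorem final (hyp : Conjecture21)
    (G : Type) [Group G] [Finite G] (N : Subgroup G) [hN : N.Normal]
    (W : FDRep ℂ ↥N) (hW : CategoryTheory.Simple W)
    (V : FDRep ℂ G) (hV : CategoryTheory.Simple V)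
    (hover : ∃ f : W ⟶ FDRep.of (V.ρ.comp N.subtype), f ≠ 0)
    (g : G) (n : G) (hn : n ∈ N) (hne : V.character (g * n) ≠ 0) :
    orderOf (QuotientGroup.mk g : G ⧸ N) * Module.finrank ℂ V ∣
      N.index * Module.finrank ℂ W := by
  obtain ⟨f, hf⟩ := hover
  have hWm := MinS_of_simple W hW
  have hVm := MinS_of_simple V hV
  have hcomm : ∀ (x : N) (w : W), lin f (W.ρ x w) = V.ρ x (lin f w) := fun x w => lin_comm f x w
  have hl0 : lin f ≠ 0 := fun h => hf (lin_ext h)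
  let l : W →ₗ[ℂ] V := lin f
  have hinj : LinearMap.ker l = ⊥ := by
    by_contra hk
    apply hl0
    have := hWm.min (LinearMap.ker l) le_top (by
      intro x _ w hw
      rw [LinearMap.mem_ker] at hw ⊢
      exact (hcomm x w).trans (by rw [show lin f w = 0 from hw, map_zero])) hk
    exact LinearMap.ker_eq_top.1 this
  have hmin : MinS V.ρ N (LinearMap.range l) := by
    refine ⟨fun h => hl0 (LinearMap.range_eq_bot.1 h), ?_, ?_⟩
    · rintro x hx _ ⟨w, rfl⟩
      exact ⟨W.ρ ⟨x, hx⟩ w, hcomm ⟨x, hx⟩ w⟩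
    · intro U hU hst hU0
      have h1 : U.comap l = ⊤ := by
        apply hWm.min _ le_top
        · intro x _ w hw
          rw [Submodule.mem_comap] at hw ⊢
          have e : l (W.ρ x w) = V.ρ x (l w) := hcomm x w
          rw [e]
          exact hst x x.2 _ hw
        · intro h
          apply hU0
          rw [Submodule.eq_bot_iff]
          intro u hu
          obtain ⟨w, rfl⟩ := hU hu
          have : w ∈ U.comap l := hu
          rw [h, Submodule.mem_bot] at this
          rw [this, map_zero]
      refine le_antisymm hU ?_
      rintro _ ⟨w, rfl⟩
      have : w ∈ U.comap l := h1 ▸ Submodule.mem_top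
      exact this
  have hq : (QuotientGroup.mk g : G ⧸ N) = QuotientGroup.mk (g * n) := by
    rw [QuotientGroup.mk_mul, (QuotientGroup.eq_one_iff n).2 hn, mul_one]
  rw [hq]
  have := (PT_all hyp N.index).2 G V V.ρ N hN rfl hVm _ hmin (g * n) _ hne (OM.exists N (g * n))
  rwa [LinearMap.finrank_range_of_inj (LinearMap.ker_eq_bot.1 hinj)] at this
end Fin
end CT

/-- **Theorem 2.2.** Assume Conjecture 2.1. Let `G` be a finite group,
`N ⊴ G`, `θ ∈ Irr(N)` (afforded by `W`), `χ ∈ Irr(G)` (afforded by `V`) lying over `θ`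
(i.e. there is a nonzero `N`-homomorphism from `W` to the restriction of `V`), and
`g ∈ G` with `χ(gn) ≠ 0` for some `n ∈ N`. Then `o(gN)·χ(1)` divides `|G:N|·θ(1)`. -/
theorem orderOf_coset_mul_degree_dvd_of_conjecture21 (hyp : Conjecture21)
    (G : Type) [Group G] [Finite G] (N : Subgroup G) [N.Normal]
    (W : FDRep ℂ ↥N) (hW : CategoryTheory.Simple W)
    (V : FDRep ℂ G) (hV : CategoryTheory.Simple V)
    (hover : ∃ f : W ⟶ FDRep.of (V.ρ.comp N.subtype), f ≠ 0)
    (g : G) (n : G) (hn : n ∈ N) (hne : V.character (g * n) ≠ 0) :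
    orderOf (QuotientGroup.mk g : G ⧸ N) * Module.finrank ℂ V ∣
      N.index * Module.finrank ℂ W := by
  exact CT.final hyp G N W hW V hV hover g n hn hne
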